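/- Let X be a standard Borel space, E a countable Borel equivalence relation on X, and ρ : E → (0,∞) a Borel cocycle. The following are equivalent: (1) there is an injective Borel compression of the quotient of ρ by a finite Borel subequivalence relation of E; (2) there is a Borel subequivalence relation of E on which ρ is aperiodic and smooth; (3) there exist an E-invariant Borel set B ⊆ X and a Borel subequivalence relation F of E such that F restricted to the complement of B is smooth, ρ restricted to F restricted to the complement of B is aperiodic, and there is a strictly (ρ restricted to F|B)-increasing Borel automorphism of B. -/

import Mathlib

open MeasureTheory Set ENNReal

namespace CocycleNadkarni

variable {X : Type*} {Γ : Type*}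

/-- The `ρ`-size of `Y` relative to the point `z`: `∑_{y ∈ Y} ρ(y, z)`. -/
noncomputable def eSize (ρ : X → X → ℝ) (Y : Set X) (z : X) : ℝ≥0∞ :=
  ∑' y : Y, ENNReal.ofReal (ρ y z)

/-- The `ρ`-size of `Y` relative to the set `Z`, computed at the point `z`. -/
noncomputable def relSize (ρ : X → X → ℝ) (Y Z : Set X) (z : X) : ℝ≥0∞ :=
  eSize ρ Y z / eSize ρ Z z

/-- Real-valued `ρ`-size (used for finite sets). -/
noncomputable def rSize (ρ : X → X → ℝ) (Y : Set X) (z : X) : ℝ :=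
  ∑' y : Y, ρ y z

/-- `∫_C f dμ^ρ_S`, computed at the point `z`. -/
noncomputable def avgOn (ρ : X → X → ℝ) (f : X → ℝ) (S C : Set X) (z : X) : ℝ :=
  (∑' y : ↥(S ∩ C), f y * ρ y z) / rSize ρ S z

/-- countable Borel equivalence relation -/
def IsCBER [MeasurableSpace X] (E : X → X → Prop) : Prop :=
  Equivalence E ∧ MeasurableSet {p : X × X | E p.1 p.2} ∧ ∀ x : X, {y | E x y}.Countable

/-- Borel cocycle `ρ : E → (0, ∞)` (as a total function whose values off `E` are irrelevant). -/
def IsCocycle [MeasurableSpace X] (E : X → X → Prop) (ρ : X → X → ℝ) : Prop :=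
  Measurable (fun p : X × X => ρ p.1 p.2) ∧
    (∀ ⦃x y : X⦄, E x y → 0 < ρ x y) ∧
    ∀ ⦃x y z : X⦄, E x y → E y z → ρ x z = ρ x y * ρ y z

/-- Borel cocycle into a group `Γ`. -/
def IsGrpCocycle [MeasurableSpace X] [Group Γ] [MeasurableSpace Γ]
    (E : X → X → Prop) (ρ : X → X → Γ) : Prop :=
  Measurable (fun p : X × X => ρ p.1 p.2) ∧
    ∀ ⦃x y z : X⦄, E x y → E y z → ρ x z = ρ x y * ρ y z

/-- finite Borel subequivalence relation of `E` -/
def IsFinSubequiv [MeasurableSpace X] (E F : X → X → Prop) : Prop :=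
  Equivalence F ∧ MeasurableSet {p : X × X | F p.1 p.2} ∧
    (∀ ⦃x y : X⦄, F x y → E x y) ∧ ∀ x : X, {y | F x y}.Finite

/-- finite Borel subequivalence relation of `E` restricted to `W` (extended by the diagonal). -/
def IsFinSubequivOn [MeasurableSpace X] (E : X → X → Prop) (W : Set X)
    (F : X → X → Prop) : Prop :=
  Equivalence F ∧ MeasurableSet {p : X × X | F p.1 p.2} ∧
    (∀ ⦃x y : X⦄, F x y → x = y ∨ (E x y ∧ x ∈ W ∧ y ∈ W)) ∧ ∀ x : X, {y | F x y}.Finite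

/-- `ρ`-invariance of a Borel measure. -/
def IsInvariant [MeasurableSpace X] (E : X → X → Prop) (ρ : X → X → ℝ)
    (μ : Measure X) : Prop :=
  ∀ T : X ≃ᵐ X, (∀ x, E (T x) x) → ∀ B : Set X, MeasurableSet B →
    μ (T '' B) = ∫⁻ x in B, ENNReal.ofReal (ρ (T x) x) ∂μ

/-- invariance w.r.t. the restriction of `ρ` to a set `R` of pairs, via Borel injections
whose graphs are contained in `R⁻¹`. -/
def IsInvariantRel [MeasurableSpace X] (R : Set (X × X)) (ρ : X → X → ℝ)
    (μ : Measure X) : Prop :=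
  ∀ (B : Set X) (T : X → X), MeasurableSet B → Measurable T → Set.InjOn T B →
    (∀ x ∈ B, ((T x, x) : X × X) ∈ R) →
    μ (T '' B) = ∫⁻ x in B, ENNReal.ofReal (ρ (T x) x) ∂μ

/-- a Borel ℕ-coloring of the lacunarity digraph `G^ρ_Z`. -/
def HasColoring [MeasurableSpace X] (E : X → X → Prop) (ρ : X → X → Γ)
    (Z : Set Γ) : Prop :=
  ∃ c : X → ℕ, Measurable c ∧
    ∀ ⦃x y : X⦄, x ≠ y → E x y → ρ x y ∈ Z → c x ≠ c y

/-- smoothness of the cocycle `ρ` restricted to `E` restricted to `W`. -/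
def SmoothOn [MeasurableSpace X] (E : X → X → Prop) (ρ : X → X → ℝ)
    (W : Set X) : Prop :=
  ∃ U : Set ℝ, IsOpen U ∧ (1:ℝ) ∈ U ∧ U ⊆ Set.Ioi 0 ∧
    ∃ c : X → ℕ, Measurable c ∧
      ∀ ⦃x y : X⦄, x ∈ W → y ∈ W → x ≠ y → E x y → ρ x y ∈ U → c x ≠ c y

/-- smoothness of the cocycle `ρ` on `E`. -/
def Smooth [MeasurableSpace X] (E : X → X → Prop) (ρ : X → X → ℝ) : Prop :=
  SmoothOn E ρ Set.univ

/-- `E`-invariance of a set. -/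
def EInvariant (E : X → X → Prop) (B : Set X) : Prop :=
  ∀ ⦃x y : X⦄, E x y → x ∈ B → y ∈ B

/-- a compression of `ρ` over the finite subequivalence relation `F` of `E`. -/
def CompressionOver [MeasurableSpace X] (E F : X → X → Prop) (ρ : X → X → ℝ)
    (φ : X → X) : Prop :=
  (∀ x, E x (φ x)) ∧
  (∀ x : X, relSize ρ (φ ⁻¹' {y | F y x}) {y | F y x} x ≤ 1) ∧
  (∀ x : X, ∃ y, E x y ∧ relSize ρ (φ ⁻¹' {z | F z y}) {z | F z y} y < 1)

/-- a compression of the quotient of `ρ | E | W` by the finite subequivalence relation given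
by the setoid `s`, expressed via representatives. -/
def QuotCompressionOn [MeasurableSpace X] (E : X → X → Prop) (ρ : X → X → ℝ)
    (W : Set X) (s : Setoid X) (φ : Quotient s → Quotient s) : Prop :=
  (∀ ⦃x : X⦄, x ∈ W → ∀ y : X, φ (Quotient.mk s x) = Quotient.mk s y → (E x y ∧ y ∈ W)) ∧
  (∀ ⦃x : X⦄, x ∈ W →
    relSize ρ {y | y ∈ W ∧ φ (Quotient.mk s y) = Quotient.mk s x} {y | s.r y x} x ≤ 1) ∧
  (∀ ⦃x : X⦄, x ∈ W → ∃ y, y ∈ W ∧ E x y ∧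
    relSize ρ {z | z ∈ W ∧ φ (Quotient.mk s z) = Quotient.mk s y} {z | s.r z y} y < 1)


/-- `B` has `ρ`-density at least `ε` relative to `W`. -/
def HasDensityAtLeastOn [MeasurableSpace X] (E : X → X → Prop) (ρ : X → X → ℝ)
    (B W : Set X) (ε : ℝ) : Prop :=
  ∃ F : X → X → Prop, IsFinSubequivOn E W F ∧
    ∀ x ∈ W, ENNReal.ofReal ε ≤ relSize ρ (B ∩ {y | F y x}) {y | F y x} x

/-- `B` has positive `ρ`-density relative to `W`. -/
def HasPosDensityOn [MeasurableSpace X] (E : X → X → Prop) (ρ : X → X → ℝ)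
    (B W : Set X) : Prop :=
  ∃ ε : ℝ, 0 < ε ∧ HasDensityAtLeastOn E ρ B W ε

/-- `B` has σ-positive `ρ`-density relative to `W`. -/
def HasSigmaPosDensityOn [MeasurableSpace X] (E : X → X → Prop) (ρ : X → X → ℝ)
    (B W : Set X) : Prop :=
  ∃ A : ℕ → Set X, (∀ n, MeasurableSet (A n)) ∧ (∀ n, A n ⊆ W) ∧
    (∀ n, ∀ x ∈ A n, ∀ y ∈ W, E x y → y ∈ A n) ∧ W = ⋃ n, A n ∧
    ∀ n, HasPosDensityOn E ρ (B ∩ A n) (A n)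

section LN
variable {Z X : Type*}

/-- covered by countably many Borel sets on which `g` is injective -/
def Sm [MeasurableSpace Z] (g : Z → X) (W : Set Z) : Prop :=
  ∃ D : ℕ → Set Z, (∀ n, MeasurableSet (D n) ∧ InjOn g (D n)) ∧ W ⊆ ⋃ n, D n

lemma Sm.iUnion [MeasurableSpace Z] {ι : Type*} [Countable ι] {g : Z → X} {W : ι → Set Z}
    (h : ∀ i, Sm g (W i)) : Sm g (⋃ i, W i) := by
  choose D hD hW using h
  rcases isEmpty_or_nonempty ι with h0 | h0
  · exact ⟨fun _ => ∅, fun n => ⟨MeasurableSet.empty, by simp⟩, by simp⟩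
  obtain ⟨e, he⟩ := exists_surjective_nat (ι × ℕ)
  refine ⟨fun n => D (e n).1 (e n).2, fun n => hD _ _, ?_⟩
  intro z hz
  obtain ⟨i, hi⟩ := mem_iUnion.1 hz
  obtain ⟨k, hk⟩ := mem_iUnion.1 (hW i hi)
  obtain ⟨n, hn⟩ := he (i, k)
  exact mem_iUnion.2 ⟨n, by simpa [hn] using hk⟩

lemma Sm.mono [MeasurableSpace Z] {g : Z → X} {W W' : Set Z} (h : Sm g W) (hs : W' ⊆ W) :
    Sm g W' := by
  obtain ⟨D, hD, hW⟩ := h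
  exact ⟨D, hD, hs.trans hW⟩

lemma Sm.of_inj [MeasurableSpace Z] {g : Z → X} {D : Set Z} (h : MeasurableSet D)
    (hi : InjOn g D) : Sm g D :=
  ⟨fun _ => D, fun _ => ⟨h, hi⟩, by simp [iUnion_const]⟩

lemma Sm.union [MeasurableSpace Z] {g : Z → X} {A B : Set Z} (h : Sm g A)
    (hi : Sm g B) : Sm g (A ∪ B) := by
  rw [union_eq_iUnion]
  exact Sm.iUnion (by rintro (_ | _) <;> simpa)

lemma exists_borel_inj [MetricSpace Z] [CompleteSpace Z] [SecondCountableTopology Z]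
    [MeasurableSpace Z] [BorelSpace Z] [TopologicalSpace X] [PolishSpace X] [MeasurableSpace X]
    [BorelSpace X] {g : Z → X} (hg : Continuous g) {H : Set Z} (hH : AnalyticSet H)
    (hi : InjOn g H) : ∃ D, MeasurableSet D ∧ InjOn g D ∧ H ⊆ D := by
  let b := TopologicalSpace.countableBasis Z
  have hb : TopologicalSpace.IsTopologicalBasis b := TopologicalSpace.isBasis_countableBasis Z
  have hbo : ∀ u : b, IsOpen (u : Set Z) := fun u => hb.isOpen u.2
  have : Countable b := (TopologicalSpace.countable_countableBasis Z).to_subtype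
  have key : ∀ u : b, MeasurablySeparable (g '' (H ∩ u)) (g '' (H ∩ (u : Set Z)ᶜ)) := by
    intro u
    have inter : ∀ s : Set Z, MeasurableSet s → AnalyticSet (H ∩ s) := by
      intro s hs
      rw [inter_eq_iInter]
      exact AnalyticSet.iInter (by rintro (_ | _) <;> simp [hH, hs.analyticSet])
    refine AnalyticSet.measurablySeparable
      ((inter _ (hbo u).measurableSet).image_of_continuous hg)
      ((inter _ (hbo u).measurableSet.compl).image_of_continuous hg) ?_
    rw [Set.disjoint_left]
    rintro _ ⟨z, hz, rfl⟩ ⟨z', hz', h⟩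
    have := hi hz'.1 hz.1 h
    subst this
    exact hz'.2 hz.2
  choose B hB1 hB2 hB3 using key
  refine ⟨{z | ∀ u : b, z ∈ (u : Set Z) ↔ g z ∈ B u}, ?_, ?_, ?_⟩
  · rw [ofPred_forall]
    refine MeasurableSet.iInter fun u => ?_
    exact MeasurableSet.iff (hbo u).measurableSet (hg.measurable (hB3 u))
  · intro z hz z' hz' h
    by_contra hne
    obtain ⟨u, hu, hzu, hsub⟩ := hb.exists_subset_of_mem_open (show z ∈ ({z'}ᶜ : Set Z) from hne)
      isOpen_compl_singleton
    have h1 := (hz ⟨u, hu⟩).1 hzu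
    rw [h] at h1
    exact hsub ((hz' ⟨u, hu⟩).2 h1) rfl
  · intro z hz u
    constructor
    · intro h
      exact hB1 u ⟨z, ⟨hz, h⟩, rfl⟩
    · intro h
      by_contra hn
      exact Set.disjoint_left.1 (hB2 u) ⟨z, ⟨hz, hn⟩, rfl⟩ h

def Large [MeasurableSpace Z] (g : Z → X) (n : ℕ) (U : ℕ → Set Z) : Prop :=
  ∀ W, Sm g W → ∃ x, ∀ i < n, ∃ z ∈ U i \ W, g z = x

lemma Large.split [MetricSpace Z] [CompleteSpace Z] [SecondCountableTopology Z]
    [MeasurableSpace Z] [BorelSpace Z] [TopologicalSpace X] [PolishSpace X] [MeasurableSpace X]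
    [BorelSpace X] {g : Z → X} (hg : Continuous g) {n : ℕ} {U : ℕ → Set Z} (hL : Large g n U)
    (hU : ∀ i < n, IsOpen (U i)) {i : ℕ} (hi : i < n) {ε : ℝ} (hε : 0 < ε) :
    ∃ V : ℕ → Set Z, Large g (n+1) V ∧ (∀ j < n + 1, IsOpen (V j)) ∧ (∀ j < n, V j ⊆ U j) ∧
      V n ⊆ U i ∧ (∀ j < n + 1, ∀ a ∈ V j, ∀ b ∈ V j, dist a b ≤ ε) ∧
      ∃ δ > 0, ∀ a ∈ V n, ∀ b ∈ V i, δ ≤ dist a b := by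
  by_contra hcon
  let b := TopologicalSpace.countableBasis Z
  have hb : TopologicalSpace.IsTopologicalBasis b := TopologicalSpace.isBasis_countableBasis Z
  have hbo : ∀ u : b, IsOpen (u : Set Z) := fun u => hb.isOpen u.2
  have : Countable b := (TopologicalSpace.countable_countableBasis Z).to_subtype
  let ext : (Fin (n+1) → b) → ℕ → Set Z := fun v j => if h : j < n + 1 then v ⟨j, h⟩ else ∅
  have hext : ∀ v j (h : j < n + 1), ext v j = v ⟨j, h⟩ := fun v j h => dif_pos h
  let good : (Fin (n+1) → b) → Prop := fun v =>
      (∀ j < n, ext v j ⊆ U j) ∧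
      ext v n ⊆ U i ∧ (∀ j < n + 1, ∀ a ∈ ext v j, ∀ b ∈ ext v j, dist a b ≤ ε) ∧
      ∃ δ > 0, ∀ a ∈ ext v n, ∀ b ∈ ext v i, δ ≤ dist a b
  have h1 : ∀ v, good v → ∃ W, Sm g W ∧ ¬ ∃ x, ∀ i < n + 1, ∃ z ∈ ext v i \ W, g z = x := by
    intro v hv
    by_contra hc
    push Not at hc
    refine hcon ⟨ext v, fun W hW => hc W hW, ?_, hv.1, hv.2.1, hv.2.2.1, hv.2.2.2⟩
    intro j hj
    rw [hext v j hj]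
    exact hbo _
  choose W hW1 hW2 using h1
  have hWS : Sm g (⋃ v : {v // good v}, W v.1 v.2) := Sm.iUnion fun v => hW1 _ _
  obtain ⟨D, hD, hWD⟩ := hWS
  let W' := ⋃ n, D n
  have hW'm : MeasurableSet W' := MeasurableSet.iUnion fun n => (hD n).1
  have hW'S : Sm g W' := ⟨D, hD, subset_rfl⟩
  let H : Set Z := (U i \ W') ∩ ⋂ j : Fin n, g ⁻¹' (g '' (U j \ W'))
  have hHa : AnalyticSet H := by
    have h2 : AnalyticSet (⋂ j : Fin n, g ⁻¹' (g '' (U j \ W'))) := by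
      have : Nonempty (Fin n) := ⟨⟨i, hi⟩⟩
      refine AnalyticSet.iInter fun j => ?_
      refine AnalyticSet.preimage ?_ hg
      exact (((hU j j.2).measurableSet.diff hW'm).analyticSet).image_of_continuous hg
    change AnalyticSet ((U i \ W') ∩ _)
    rw [inter_eq_iInter]
    refine AnalyticSet.iInter ?_
    rintro (_ | _)
    · simpa using h2
    · simpa using ((hU i hi).measurableSet.diff hW'm).analyticSet
  have hHi : InjOn g H := by
    intro z hz z' hz' hgz
    by_contra hne
    have hj : ∀ j : Fin n, ∃ y ∈ U j \ W', g y = g z := fun j => by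
      have := mem_iInter.1 hz.2 j
      exact this
    choose y hy hgy using hj
    -- points
    let p : Fin (n+1) → Z := fun j => if h : (j : ℕ) < n then (if (j : ℕ) = i then z else y ⟨j, h⟩)
      else z'
    let O : Fin (n+1) → Set Z := fun j => if h : (j : ℕ) < n then U j else U i
    have hd : 0 < dist z z' := dist_pos.2 hne
    let r := min (ε / 2) (dist z z' / 3)
    have hr : 0 < r := lt_min (by positivity) (by positivity)
    have hp : ∀ j, p j ∈ O j ∩ Metric.ball (p j) r := by
      intro j
      refine ⟨?_, Metric.mem_ball_self hr⟩
      by_cases h : (j : ℕ) < n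
      · by_cases h' : (j : ℕ) = i
        · simp only [p, O, h, h', dif_pos, if_true]
          simp only [hi, dif_pos]
          exact hz.1.1
        · simp only [p, O, h, h', dif_pos, if_false]
          exact (hy ⟨j, h⟩).1
      · simp only [p, O, h, dif_neg, not_false_eq_true]
        exact hz'.1.1
    have hO : ∀ j, IsOpen (O j ∩ Metric.ball (p j) r) := by
      intro j
      refine IsOpen.inter ?_ Metric.isOpen_ball
      by_cases h : (j : ℕ) < n
      · simp only [O, h, dif_pos]; exact hU _ h
      · simp only [O, h, dif_neg, not_false_eq_true]; exact hU _ hi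
    choose v hv hpv hvs using fun j => hb.exists_subset_of_mem_open (hp j) (hO j)
    let v' : Fin (n+1) → b := fun j => ⟨v j, hv j⟩
    have hpi : p ⟨i, by omega⟩ = z := by simp [p, hi]
    have hpn : p ⟨n, by omega⟩ = z' := by simp [p]
    have hgood : good v' := by
      refine ⟨?_, ?_, ?_, dist z z' / 3, by positivity, ?_⟩
      · intro j hj
        rw [hext _ j (by omega)]
        have := (hvs ⟨j, by omega⟩).trans inter_subset_left
        simpa [O, hj] using this
      · rw [hext _ n (by omega)]
        have := (hvs ⟨n, by omega⟩).trans inter_subset_left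
        simpa [O] using this
      · intro j hj a ha c hc
        rw [hext _ j hj] at ha hc
        have h1 := ((hvs ⟨j, hj⟩) ha).2
        have h2 := ((hvs ⟨j, hj⟩) hc).2
        rw [Metric.mem_ball] at h1 h2
        have h3 := dist_triangle_right a c (p ⟨j, hj⟩)
        have : r ≤ ε / 2 := min_le_left _ _
        linarith
      · intro a ha c hc
        rw [hext _ n (by omega)] at ha
        rw [hext _ i (by omega)] at hc
        have h1 := ((hvs _) ha).2
        have h2 := ((hvs _) hc).2
        rw [Metric.mem_ball] at h1 h2
        rw [hpn] at h1
        rw [hpi] at h2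
        have : r ≤ dist z z' / 3 := min_le_right _ _
        have h3 := dist_triangle4 z c a z'
        rw [dist_comm] at h2
        rw [dist_comm c a] at h3
        linarith
    refine hW2 v' hgood ⟨g z, ?_⟩
    intro j hj
    refine ⟨p ⟨j, hj⟩, ⟨?_, ?_⟩, ?_⟩
    · rw [hext _ j hj]; exact hpv _
    · intro hc
      have hc' : p ⟨j, hj⟩ ∈ W' := hWD (mem_iUnion.2 ⟨⟨v', hgood⟩, hc⟩)
      by_cases h : j < n
      · by_cases h' : j = i
        · simp only [p, h, h', dif_pos, if_true] at hc'
          simp only [hi, dif_pos] at hc'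
          exact hz.1.2 hc'
        · simp only [p, h, h', dif_pos, if_false] at hc'
          exact (hy ⟨j, h⟩).2 hc'
      · simp only [p, h, dif_neg, not_false_eq_true] at hc'
        exact hz'.1.2 hc'
    · by_cases h : j < n
      · by_cases h' : j = i
        · simp [p, h', hi]
        · simp only [p, h, h', dif_pos, if_false]
          exact hgy _
      · simp only [p, h, dif_neg, not_false_eq_true]
        exact hgz.symm
  obtain ⟨D', hD'm, hD'i, hHD⟩ := exists_borel_inj hg hHa hHi
  obtain ⟨x, hx⟩ := hL (W' ∪ D') (hW'S.union (Sm.of_inj hD'm hD'i))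
  obtain ⟨z, hz, hzx⟩ := hx i hi
  apply hz.2
  right
  apply hHD
  refine ⟨⟨hz.1, fun h => hz.2 (Or.inl h)⟩, mem_iInter.2 fun j => ?_⟩
  obtain ⟨y, hy, hyx⟩ := hx j j.2
  exact ⟨y, ⟨hy.1, fun h => hy.2 (Or.inl h)⟩, by rw [hyx, hzx]⟩

end LN

section LN2
variable {Z X : Type*}

lemma ln_metric [MetricSpace Z] [CompleteSpace Z] [SecondCountableTopology Z]
    [MeasurableSpace Z] [BorelSpace Z] [TopologicalSpace X] [PolishSpace X] [MeasurableSpace X]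
    [BorelSpace X] {g : Z → X} (hg : Continuous g) (hc : ∀ x, (g ⁻¹' {x}).Countable) :
    Sm g univ := by
  by_contra hns
  let P : ℕ → (ℕ → Set Z) → Prop := fun n U => Large g (n+1) U ∧ ∀ j < n + 1, IsOpen (U j)
  let idx : ℕ → ℕ := fun n => (Nat.unpair n).1
  have hidx : ∀ n, idx n < n + 1 := fun n => Nat.lt_succ_of_le (Nat.unpair_left_le n)
  have step : ∀ n U, P n U → ∃ V, P (n+1) V ∧ (∀ j < n + 1, V j ⊆ U j) ∧
      V (n+1) ⊆ U (idx n) ∧ (∀ j < n + 2, ∀ a ∈ V j, ∀ b ∈ V j, dist a b ≤ (1/2 : ℝ)^n) ∧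
      ∃ δ > 0, ∀ a ∈ V (n+1), ∀ b ∈ V (idx n), δ ≤ dist a b := by
    intro n U hU
    obtain ⟨V, h1, h2, h3, h4, h5, h6⟩ := Large.split hg hU.1 hU.2 (hidx n)
      (show (0:ℝ) < (1/2 : ℝ)^n by positivity)
    exact ⟨V, ⟨h1, h2⟩, h3, h4, h5, h6⟩
  choose nxt hn1 hn2 hn3 hn4 hn5 using step
  have h0 : P 0 (fun _ => univ) := by
    refine ⟨?_, fun j _ => isOpen_univ⟩
    intro W hW
    by_contra hcon
    push Not at hcon
    apply hns
    refine hW.mono fun z _ => ?_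
    by_contra hz
    obtain ⟨i, hi, hi2⟩ := hcon (g z)
    exact hi2 z ⟨mem_univ _, hz⟩ rfl
  let sq : (n : ℕ) → {U // P n U} := fun n => Nat.rec ⟨fun _ => univ, h0⟩
    (fun n U => ⟨nxt n U.1 U.2, hn1 n U.1 U.2⟩) n
  let U : ℕ → ℕ → Set Z := fun n => (sq n).1
  have hUP : ∀ n, P n (U n) := fun n => (sq n).2
  have hU1 : ∀ n, ∀ j < n + 1, U (n+1) j ⊆ U n j := fun n => hn2 n (sq n).1 (sq n).2
  have hU2 : ∀ n, U (n+1) (n+1) ⊆ U n (idx n) := fun n => hn3 n (sq n).1 (sq n).2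
  have hU3 : ∀ n, ∀ j < n + 2, ∀ a ∈ U (n+1) j, ∀ b ∈ U (n+1) j, dist a b ≤ (1/2 : ℝ)^n :=
    fun n => hn4 n (sq n).1 (sq n).2
  have hU4 : ∀ n, ∃ δ > 0, ∀ a ∈ U (n+1) (n+1), ∀ b ∈ U (n+1) (idx n), δ ≤ dist a b :=
    fun n => hn5 n (sq n).1 (sq n).2
  clear_value U
  have hmono : ∀ n m j, j < n + 1 → n ≤ m → U m j ⊆ U n j := by
    intro n m j hj hnm
    induction m, hnm using Nat.le_induction with
    | base => exact subset_rfl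
    | succ m hm ih => exact (hU1 m j (by omega)).trans ih
  have hSe : Sm g (∅ : Set Z) := Sm.of_inj MeasurableSet.empty (by simp)
  choose x hx using fun n => (hUP n).1 ∅ hSe
  choose y hy hyx using fun n (i : {i // i < n + 1}) => hx n i i.2
  let z : ℕ → ℕ → Z := fun i n => y (n + i) ⟨i, by omega⟩
  -- z i n ∈ U (n+i) i
  have hz : ∀ i n, z i n ∈ U (n + i) i := fun i n => (hy (n+i) ⟨i, by omega⟩).1
  have hgz : ∀ i n, g (z i n) = x (n + i) := fun i n => hyx _ _
  have hzm : ∀ i n m, n ≤ m + i → i ≤ n → z i m ∈ U n i := fun i n m h h' =>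
    hmono n (m+i) i (by omega) h (hz i m)
  have hcau : ∀ i, CauchySeq (z i) := by
    intro i
    rw [Metric.cauchySeq_iff']
    intro ε hε
    obtain ⟨N, hN⟩ := exists_pow_lt_of_lt_one hε (show (1/2 : ℝ) < 1 by norm_num)
    refine ⟨N + 1, fun n hn => ?_⟩
    refine lt_of_le_of_lt (hU3 (N+i) i (by omega) _ (hzm _ _ _ (by omega) (by omega)) _
      (hzm _ _ _ (by omega) (by omega))) ?_
    refine lt_of_le_of_lt ?_ hN
    exact pow_le_pow_of_le_one (by norm_num) (by norm_num) (by omega)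
  choose ζ hζ using fun i => cauchySeq_tendsto_of_complete (hcau i)
  have hxi : ∀ i, Filter.Tendsto x Filter.atTop (nhds (g (ζ i))) := by
    intro i
    have h1 := (hg.tendsto (ζ i)).comp (hζ i)
    have h2 : (g ∘ z i) = fun n => x (n + i) := funext fun n => hgz i n
    rw [h2] at h1
    exact (Filter.tendsto_add_atTop_iff_nat i).1 h1
  have hfib : ∀ i, g (ζ i) = g (ζ 0) := fun i => tendsto_nhds_unique (hxi i) (hxi 0)
  -- distances
  have hzt : ∀ i k, Filter.Tendsto (fun n => z i (n + k)) Filter.atTop (nhds (ζ i)) := fun i k =>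
    (hζ i).comp (Filter.tendsto_add_atTop_nat k)
  have hne : ∀ n, ζ (n+1) ≠ ζ (idx n) := by
    intro n h
    obtain ⟨δ, hδ, hd⟩ := hU4 n
    have h1 : δ ≤ dist (ζ (n+1)) (ζ (idx n)) := by
      refine ge_of_tendsto ((hzt (n+1) (n+1)).dist (hzt (idx n) (n+1))) ?_
      refine Filter.Eventually.of_forall fun m => hd _ (hzm _ _ _ (by omega) (by omega)) _
        (hzm _ _ _ (by omega) (by have := hidx n; omega))
    rw [h, dist_self] at h1
    linarith
  have hclose : ∀ n, dist (ζ (n+2)) (ζ (idx (n+1))) ≤ (1/2:ℝ)^n := by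
    intro n
    refine le_of_tendsto ((hzt (n+2) (n+2)).dist (hzt (idx (n+1)) (n+2))) ?_
    refine Filter.Eventually.of_forall fun m => ?_
    have := hidx (n+1)
    refine hU3 n (idx (n+1)) (by omega) _ ?_ _ ?_
    · exact hU2 (n+1) (hzm _ _ _ (by omega) (by omega))
    · exact hzm _ _ _ (by omega) (by omega)
  have hpre : Preperfect (range ζ) := by
    rw [preperfect_iff_nhds]
    rintro _ ⟨i, rfl⟩ O hO
    obtain ⟨ε, hε, hball⟩ := Metric.mem_nhds_iff.1 hO
    obtain ⟨N, hN⟩ := exists_pow_lt_of_lt_one hε (show (1/2 : ℝ) < 1 by norm_num)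
    have h1 : N + 1 ≤ Nat.pair i (N+1) := Nat.right_le_pair _ _
    obtain ⟨n, hn⟩ : ∃ n, Nat.pair i (N+1) = n + 1 := ⟨Nat.pair i (N+1) - 1, by omega⟩
    have h2 : idx (n+1) = i := by simp [idx, ← hn]
    refine ⟨ζ (n+2), ⟨hball ?_, mem_range_self _⟩, ?_⟩
    · rw [Metric.mem_ball]
      have := hclose n
      rw [h2] at this
      refine lt_of_le_of_lt this (lt_of_le_of_lt ?_ hN)
      exact pow_le_pow_of_le_one (by norm_num) (by norm_num) (by omega)
    · have := hne (n+1)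
      rwa [h2] at this
  obtain ⟨f, hf, -, hfi⟩ := hpre.perfect_closure.exists_nat_bool_injection
    (range_nonempty ζ).closure
  have hsub : closure (range ζ) ⊆ g ⁻¹' {g (ζ 0)} := by
    refine closure_minimal ?_ (isClosed_singleton.preimage hg)
    rintro _ ⟨i, rfl⟩
    exact hfib i
  have hcount : (range f).Countable := (hc _).mono (hf.trans hsub)
  have : Countable (ℕ → Bool) := by
    have := hcount.to_subtype
    exact (Set.rangeFactorization_injective.2 hfi).countable
  obtain ⟨e, he⟩ := exists_surjective_nat (ℕ → Bool)
  obtain ⟨n, hn⟩ := he (fun n => !(e n n))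
  have := congrFun hn n
  simp at this

lemma ln_borel [MeasurableSpace Z] [StandardBorelSpace Z] [MeasurableSpace X]
    [StandardBorelSpace X] {g : Z → X} (hgm : Measurable g)
    (hgc : ∀ x, (g ⁻¹' {x}).Countable) : Sm g univ := by
  letI := upgradeStandardBorel X
  letI uZ := upgradeStandardBorel Z
  have hpZ : @PolishSpace Z uZ.toTopologicalSpace := inferInstance
  obtain ⟨t', ht', hcont, hpol⟩ := hgm.exists_continuous
  have hb : @BorelSpace Z t' _ := by
    refine @BorelSpace.mk Z t' _ ?_
    rw [borel_eq_borel_of_le hpol hpZ ht']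
    exact uZ.toBorelSpace.measurable_eq
  letI := t'
  letI := TopologicalSpace.upgradeIsCompletelyMetrizable Z
  exact ln_metric hcont hgc

/-- Luzin–Novikov for countable Borel relations. -/
theorem lusin_novikov [MeasurableSpace X] [StandardBorelSpace X] (E : X → X → Prop)
    (hE : IsCBER E) : ∃ f : ℕ → X → X, (∀ n, Measurable (f n)) ∧ f 0 = id ∧
      (∀ n x, E x (f n x)) ∧ ∀ x y, E x y → ∃ n, f n x = y := by
  obtain ⟨hEq, hEm, hEc⟩ := hE
  let Z := {p : X × X // E p.1 p.2}
  have : StandardBorelSpace Z := hEm.standardBorel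
  let g : Z → X := fun p => p.1.1
  have hgm : Measurable g := measurable_fst.comp measurable_subtype_coe
  have hgc : ∀ x, (g ⁻¹' {x}).Countable := by
    intro x
    refine ((hEc x).image (fun y => (x, y))).preimage_of_injOn (f := fun p : Z => p.1)
      Subtype.val_injective.injOn |>.mono ?_
    rintro ⟨⟨a, b⟩, hab⟩ h
    have h : a = x := h
    subst h
    exact ⟨b, hab, rfl⟩
  have hSm : Sm g univ := ln_borel hgm hgc
  obtain ⟨D, hD, hDu⟩ := hSm
  have hDf : ∀ n x, ∃ y, (∃ h : E x y, (⟨(x, y), h⟩ : Z) ∈ D n) ∨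
      ((¬ ∃ y, ∃ h : E x y, (⟨(x, y), h⟩ : Z) ∈ D n) ∧ y = x) := by
    intro n x
    by_cases h : ∃ y, ∃ h : E x y, (⟨(x, y), h⟩ : Z) ∈ D n
    · obtain ⟨y, hy⟩ := h
      exact ⟨y, Or.inl hy⟩
    · exact ⟨x, Or.inr ⟨h, rfl⟩⟩
  choose f hf using hDf
  have hfE : ∀ n x, E x (f n x) := by
    intro n x
    rcases hf n x with ⟨h, _⟩ | ⟨_, h⟩
    · exact h
    · rw [h]; exact hEq.refl x
  have hfD : ∀ n x y (h : E x y), (⟨(x, y), h⟩ : Z) ∈ D n → f n x = y := by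
    intro n x y h hy
    rcases hf n x with ⟨h', h2⟩ | ⟨h2, _⟩
    · have := (hD n).2 h2 hy rfl
      simpa [Z] using this
    · exact absurd ⟨y, h, hy⟩ h2
  have hfm : ∀ n, Measurable (f n) := by
    intro n A hA
    let p2 : Z → X := fun p => p.1.2
    have hp2 : Measurable p2 := measurable_snd.comp measurable_subtype_coe
    have e : f n ⁻¹' A = (g '' (D n ∩ p2 ⁻¹' A)) ∪ ((g '' D n)ᶜ ∩ A) := by
      ext x
      constructor
      · intro hx
        by_cases h : x ∈ g '' D n
        · left
          obtain ⟨⟨⟨a, b⟩, hab⟩, h1, rfl⟩ := h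
          refine ⟨⟨⟨a, b⟩, hab⟩, ⟨h1, ?_⟩, rfl⟩
          have := hfD n a b hab h1
          change b ∈ A
          rw [← this]; exact hx
        · right
          refine ⟨h, ?_⟩
          rcases hf n x with ⟨h', h2⟩ | ⟨_, h2⟩
          · exact absurd ⟨_, h2, rfl⟩ h
          · change f n x ∈ A at hx
            rwa [h2] at hx
      · rintro (⟨⟨⟨a, b⟩, hab⟩, ⟨h1, h2⟩, rfl⟩ | ⟨h, hA⟩)
        · change f n a ∈ A
          rw [hfD n a b hab h1]; exact h2
        · change f n x ∈ A
          rcases hf n x with ⟨h', h2⟩ | ⟨_, h2⟩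
          · exact absurd ⟨_, h2, rfl⟩ h
          · rwa [h2]
    rw [e]
    refine MeasurableSet.union ?_ (MeasurableSet.inter (MeasurableSet.compl ?_) hA)
    · exact ((hD n).1.inter (hp2 hA)).image_of_measurable_injOn hgm
        ((hD n).2.mono inter_subset_left)
    · exact (hD n).1.image_of_measurable_injOn hgm (hD n).2
  refine ⟨fun n => Nat.casesOn n id f, ?_, rfl, ?_, ?_⟩
  · rintro (_ | n)
    · exact measurable_id
    · exact hfm n
  · rintro (_ | n) x
    · exact hEq.refl x
    · exact hfE n x
  · intro x y h
    obtain ⟨n, hn⟩ := mem_iUnion.1 (hDu (mem_univ (⟨(x, y), h⟩ : Z)))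
    exact ⟨n+1, hfD n x y h hn⟩

end LN2

section Helpers
variable {X : Type*}

lemma IsCocycle.self [MeasurableSpace X] {E : X → X → Prop} {ρ : X → X → ℝ}
    (hE : Equivalence E) (h : IsCocycle E ρ) (x : X) : ρ x x = 1 := by
  have h1 := h.2.2 (hE.refl x) (hE.refl x)
  have h2 := h.2.1 (hE.refl x)
  have : ρ x x * (ρ x x - 1) = 0 := by linarith
  rcases mul_eq_zero.1 this with h3 | h3
  · linarith
  · linarith

lemma IsCocycle.symm_mul [MeasurableSpace X] {E : X → X → Prop} {ρ : X → X → ℝ}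
    (hE : Equivalence E) (h : IsCocycle E ρ) {x y : X} (hxy : E x y) : ρ x y * ρ y x = 1 := by
  rw [← h.2.2 hxy (hE.symm hxy), h.self hE]

lemma IsCocycle.flip [MeasurableSpace X] {E : X → X → Prop} {ρ : X → X → ℝ}
    (hE : Equivalence E) (h : IsCocycle E ρ) : IsCocycle E (fun x y => ρ y x) := by
  refine ⟨h.1.comp measurable_swap, fun x y hxy => h.2.1 (hE.symm hxy), fun x y z hxy hyz => ?_⟩
  show ρ z x = ρ y x * ρ z y
  rw [h.2.2 (hE.symm hyz) (hE.symm hxy), mul_comm]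

lemma eSize_mono {ρ : X → X → ℝ} {A A' : Set X} (h : A ⊆ A') (x : X) :
    eSize ρ A x ≤ eSize ρ A' x :=
  ENNReal.tsum_mono_subtype (fun y => ENNReal.ofReal (ρ y x)) h

lemma eSize_empty {ρ : X → X → ℝ} (x : X) : eSize ρ ∅ x = 0 := by
  unfold eSize; simp

lemma eSize_singleton {ρ : X → X → ℝ} (y x : X) : eSize ρ {y} x = ENNReal.ofReal (ρ y x) := by
  unfold eSize
  exact tsum_singleton y (fun y => ENNReal.ofReal (ρ y x))

lemma eSize_change [MeasurableSpace X] {E : X → X → Prop} {ρ : X → X → ℝ}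
    (hE : Equivalence E) (h : IsCocycle E ρ) {A : Set X} {x x' : X} (hxx : E x x')
    (hA : ∀ y ∈ A, E y x) : eSize ρ A x' = eSize ρ A x * ENNReal.ofReal (ρ x x') := by
  unfold eSize
  rw [← ENNReal.tsum_mul_right]
  refine tsum_congr fun y => ?_
  rw [h.2.2 (hA y y.2) hxx, ENNReal.ofReal_mul (h.2.1 (hA y y.2)).le]

open Classical in
lemma eSize_enum {ρ : X → X → ℝ} (f : ℕ → X → X) (t x : X) (A : Set X)
    (hA : ∀ y ∈ A, ∃ n, f n t = y) :
    eSize ρ A x = ∑' n, if (f n t ∈ A ∧ ∀ m < n, f m t ≠ f n t)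
      then ENNReal.ofReal (ρ (f n t) x) else 0 := by
  let i : A → ℕ := fun y => Nat.find (hA y y.2)
  have hi : ∀ y : A, f (i y) t = y := fun y => Nat.find_spec (hA y y.2)
  have hi2 : ∀ y : A, ∀ m < i y, f m t ≠ y := fun y m hm => Nat.find_min (hA y y.2) hm
  have inj : Function.Injective i := fun y y' h => by
    apply Subtype.ext; rw [← hi y, ← hi y', h]
  rw [← inj.tsum_eq]
  · unfold eSize
    refine tsum_congr fun y => ?_
    rw [hi y, if_pos ⟨y.2, hi2 y⟩]
  · intro n hn
    have hc : (f n t ∈ A ∧ ∀ m < n, f m t ≠ f n t) := by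
      by_contra hc
      simp [hc] at hn
    refine ⟨⟨f n t, hc.1⟩, ?_⟩
    apply le_antisymm
    · exact Nat.find_min' _ rfl
    · by_contra hlt
      push Not at hlt
      exact hc.2 _ hlt (hi ⟨f n t, hc.1⟩)

lemma sel {Y : Type*} [MeasurableSpace X] [MeasurableSpace Y] {f : ℕ → X → Y}
    (hf : ∀ n, Measurable (f n))
    {p : ℕ → X → Prop} (hp : ∀ n, MeasurableSet {x | p n x}) (h : ∀ x, ∃ n, p n x) :
    ∃ r : X → Y, Measurable r ∧ ∀ x, ∃ n, p n x ∧ (∀ m < n, ¬ p m x) ∧ r x = f n x := by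
  classical
  refine ⟨fun x => f (Nat.find (h x)) x, Measurable.find hf hp h, fun x => ?_⟩
  exact ⟨_, Nat.find_spec (h x), fun m hm => Nat.find_min (h x) hm, rfl⟩

lemma mrel [MeasurableSpace X] {Y : Type*} [MeasurableSpace Y] {F : X → X → Prop}
    (hF : MeasurableSet {p : X × X | F p.1 p.2}) {a b : Y → X} (ha : Measurable a)
    (hb : Measurable b) : Measurable fun y => F (a y) (b y) :=
  (measurableSet_setOfPred.1 hF).comp (ha.prodMk hb)

lemma mcoc [MeasurableSpace X] {Y : Type*} [MeasurableSpace Y] {ρ : X → X → ℝ}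
    (hρ : Measurable (fun p : X × X => ρ p.1 p.2)) {a b : Y → X} (ha : Measurable a)
    (hb : Measurable b) : Measurable fun y => ρ (a y) (b y) :=
  hρ.comp (ha.prodMk hb)

lemma mlt {Y : Type*} [MeasurableSpace Y] {a b : Y → ℝ} (ha : Measurable a)
    (hb : Measurable b) : Measurable fun y => a y < b y :=
  measurableSet_setOfPred.1 (measurableSet_lt ha hb)

lemma mle {Y : Type*} [MeasurableSpace Y] {a b : Y → ℝ} (ha : Measurable a)
    (hb : Measurable b) : Measurable fun y => a y ≤ b y :=
  measurableSet_setOfPred.1 (measurableSet_le ha hb)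

lemma meq {Y Z : Type*} [MeasurableSpace Y] [MeasurableSpace Z] [StandardBorelSpace Z]
    {a b : Y → Z} (ha : Measurable a)
    (hb : Measurable b) : Measurable fun y => a y = b y :=
  measurableSet_setOfPred.1 (measurableSet_eq_fun ha hb)

lemma mmem {Y Z : Type*} [MeasurableSpace Y] [MeasurableSpace Z]
    {a : Y → Z} (ha : Measurable a) {S : Set Z} (hS : MeasurableSet S) :
    Measurable fun y => a y ∈ S :=
  measurableSet_setOfPred.1 (ha hS)

end Helpers

section TwoThree
variable {X : Type*}

lemma mforall [MeasurableSpace X] {Y : Type*} [MeasurableSpace Y] {F : X → X → Prop}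
    (hF : MeasurableSet {p : X × X | F p.1 p.2}) {f : ℕ → X → X} (hf : ∀ n, Measurable (f n))
    (hfF : ∀ x y, F x y → ∃ n, f n x = y) {a : Y → X} (ha : Measurable a) {Q : Y → X → Prop}
    (hQ : Measurable fun p : Y × X => Q p.1 p.2) :
    Measurable fun y => ∀ z, F (a y) z → Q y z := by
  have : (fun y => ∀ z, F (a y) z → Q y z) =
      fun y => ∀ n, F (a y) (f n (a y)) → Q y (f n (a y)) := by
    funext y
    apply propext
    constructor
    · intro h n hn
      exact h _ hn
    · intro h z hz
      obtain ⟨n, rfl⟩ := hfF _ _ hz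
      exact h n hz
  rw [this]
  refine Measurable.forall fun n => Measurable.imp ?_ ?_
  · exact mrel hF ha ((hf n).comp ha)
  · exact hQ.comp (measurable_id.prodMk ((hf n).comp ha))

lemma mexists [MeasurableSpace X] {Y : Type*} [MeasurableSpace Y] {F : X → X → Prop}
    (hF : MeasurableSet {p : X × X | F p.1 p.2}) {f : ℕ → X → X} (hf : ∀ n, Measurable (f n))
    (hfF : ∀ x y, F x y → ∃ n, f n x = y) {a : Y → X} (ha : Measurable a) {Q : Y → X → Prop}
    (hQ : Measurable fun p : Y × X => Q p.1 p.2) :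
    Measurable fun y => ∃ z, F (a y) z ∧ Q y z := by
  have h := (mforall hF hf hfF ha (Q := fun y z => ¬ Q y z) hQ.not).not
  convert h using 2 with y
  push Not
  rfl

/-- `y` is the successor of `x` within its color -/
def IsSucc (F : X → X → Prop) (ρ : X → X → ℝ) (c : X → ℕ) (x y : X) : Prop :=
  (F x y ∧ c y = c x ∧ 1 < ρ y x) ∧ ∀ z, F x z → (c z = c x → 1 < ρ z x → ρ y x ≤ ρ z x)

def Lac (F : X → X → Prop) (ρ : X → X → ℝ) (c : X → ℕ) (l : ℝ) : Prop :=
  ∀ x y, x ≠ y → F x y → c x = c y → 1 < ρ x y → l ≤ ρ x y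

variable [MeasurableSpace X] {F : X → X → Prop} {ρ : X → X → ℝ} {c : X → ℕ} {l : ℝ}

lemma IsSucc.exists (hF : Equivalence F) (hρ : IsCocycle F ρ) (hl : 1 < l) (hL : Lac F ρ c l)
    {x z : X} (hz : F x z) (hc : c z = c x) (h1 : 1 < ρ z x) : ∃ y, IsSucc F ρ c x y := by
  let A : Set ℝ := {r | ∃ z, F x z ∧ c z = c x ∧ 1 < ρ z x ∧ ρ z x = r}
  have hA : A.Nonempty := ⟨_, z, hz, hc, h1, rfl⟩
  have hb : BddBelow A := ⟨1, by rintro _ ⟨z, _, _, h, rfl⟩; exact h.le⟩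
  have hi : 1 ≤ sInf A := le_csInf hA (by rintro _ ⟨z, _, _, h, rfl⟩; exact h.le)
  have : sInf A < sInf A * l := by nlinarith
  obtain ⟨_, ⟨y, hy, hyc, hy1, rfl⟩, hlt⟩ := exists_lt_of_csInf_lt hA this
  refine ⟨y, ⟨hy, hyc, hy1⟩, ?_⟩
  intro w hw hwc hw1
  by_contra hcon
  push Not at hcon
  have hwy : F y w := hF.trans (hF.symm hy) hw
  have e : ρ y x = ρ y w * ρ w x := hρ.2.2 hwy (hF.symm hw)
  have h2 : 1 < ρ y w := by
    by_contra h3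
    push Not at h3
    nlinarith
  have hne : y ≠ w := by
    rintro rfl
    exact lt_irrefl _ hcon
  have h3 := hL y w hne hwy (by rw [hyc, hwc]) h2
  have h4 : sInf A ≤ ρ w x := csInf_le hb ⟨w, hw, hwc, hw1, rfl⟩
  nlinarith

lemma lac_eq (hF : Equivalence F) (hρ : IsCocycle F ρ)
    (hl1 : ∀ x y, x ≠ y → F x y → c x = c y → ρ x y ≠ 1) {x y : X} (h : F x y) (hc : c x = c y)
    (h1 : ρ x y = 1) : x = y := by
  by_contra hne
  exact hl1 x y hne h hc h1

lemma IsSucc.unique (hF : Equivalence F) (hρ : IsCocycle F ρ)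
    (hl1 : ∀ x y, x ≠ y → F x y → c x = c y → ρ x y ≠ 1) {x y y' : X}
    (h : IsSucc F ρ c x y) (h' : IsSucc F ρ c x y') : y = y' := by
  have e := le_antisymm (h.2 y' h'.1.1 h'.1.2.1 h'.1.2.2) (h'.2 y h.1.1 h.1.2.1 h.1.2.2)
  have hyy : F y y' := hF.trans (hF.symm h.1.1) h'.1.1
  have e2 : ρ y x = ρ y y' * ρ y' x := hρ.2.2 hyy (hF.symm h'.1.1)
  refine lac_eq hF hρ hl1 hyy (by rw [h.1.2.1, h'.1.2.1]) ?_
  have := h'.1.2.2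
  rw [e] at e2
  have h3 : (ρ y y' - 1) * ρ y' x = 0 := by linarith
  rcases mul_eq_zero.1 h3 with h4 | h4 <;> linarith

lemma IsSucc.flip (hF : Equivalence F) (hρ : IsCocycle F ρ) {x y : X}
    (h : IsSucc F ρ c x y) : IsSucc F (fun a b => ρ b a) c y x := by
  refine ⟨⟨hF.symm h.1.1, h.1.2.1.symm, h.1.2.2⟩, ?_⟩
  intro z hz hc h1
  change 1 < ρ y z at h1
  change ρ y x ≤ ρ y z
  by_contra hcon
  push Not at hcon
  have hxz : F x z := hF.trans h.1.1 hz
  have e : ρ y x = ρ y z * ρ z x := hρ.2.2 hz (hF.symm hxz)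
  have h2 : 1 < ρ z x := by
    by_contra h3; push Not at h3
    nlinarith
  have h3 := h.2 z hxz (hc.trans h.1.2.1) h2
  nlinarith

lemma IsSucc.measurable (hF : MeasurableSet {p : X × X | F p.1 p.2})
    {f : ℕ → X → X} (hf : ∀ n, Measurable (f n))
    (hfF : ∀ x y, F x y → ∃ n, f n x = y) (hρ : Measurable (fun p : X × X => ρ p.1 p.2))
    (hc : Measurable c) : Measurable fun p : X × X => IsSucc F ρ c p.1 p.2 := by
  refine Measurable.and (Measurable.and (mrel hF measurable_fst measurable_snd)
    (Measurable.and (meq (hc.comp measurable_snd) (hc.comp measurable_fst))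
      (mlt measurable_const (mcoc hρ measurable_snd measurable_fst)))) ?_
  refine mforall hF hf hfF measurable_fst ?_
  refine Measurable.imp (meq (hc.comp measurable_snd)
    (hc.comp (measurable_fst.comp measurable_fst))) (Measurable.imp
      (mlt measurable_const (mcoc hρ measurable_snd (measurable_fst.comp measurable_fst)))
      (mle (mcoc hρ (measurable_snd.comp measurable_fst) (measurable_fst.comp measurable_fst))
      (mcoc hρ measurable_snd (measurable_fst.comp measurable_fst))))

theorem two_three [StandardBorelSpace X]
    (E : X → X → Prop) (hE : IsCBER E)
    (ρ : X → X → ℝ) (hρ : IsCocycle E ρ) :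
    (∃ F : X → X → Prop, Equivalence F ∧ MeasurableSet {p : X × X | F p.1 p.2} ∧
        (∀ ⦃x y : X⦄, F x y → E x y) ∧
        (∀ x : X, eSize ρ {y | F y x} x = ⊤) ∧ Smooth F ρ) →
      (∃ B : Set X, MeasurableSet B ∧ EInvariant E B ∧
        ∃ F : X → X → Prop, Equivalence F ∧ MeasurableSet {p : X × X | F p.1 p.2} ∧
          (∀ ⦃x y : X⦄, F x y → E x y) ∧
          (∃ T : Set X, MeasurableSet T ∧ T ⊆ Bᶜ ∧ ∀ x ∈ Bᶜ, ∃! y, y ∈ T ∧ F x y) ∧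
          (∀ x ∉ B, eSize ρ {y | F y x ∧ y ∉ B} x = ⊤) ∧
          (∃ T : X ≃ᵐ X, (∀ x ∈ B, T x ∈ B ∧ F x (T x)) ∧ (∀ x ∈ B, T.symm x ∈ B) ∧
            ∀ x ∈ B, eSize ρ {y | y ∈ B ∧ T y = x} x < 1)) := by
  rintro ⟨F, hF, hFm, hFE, hinf, U, hUo, hU1, hU0, c, hcm, hcol⟩
  obtain ⟨f, hf, hf0, hfE, hfs⟩ := lusin_novikov E hE
  have hEq := hE.1
  have hfF : ∀ x y, F x y → ∃ n, f n x = y := fun x y h => hfs x y (hFE h)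
  have hρF : IsCocycle F ρ := ⟨hρ.1, fun x y h => hρ.2.1 (hFE h),
    fun x y z h h' => hρ.2.2 (hFE h) (hFE h')⟩
  have hl1 : ∀ x y, x ≠ y → F x y → c x = c y → ρ x y ≠ 1 := by
    intro x y hne h hc h1
    exact hcol (mem_univ _) (mem_univ _) hne h (by rw [h1]; exact hU1) hc
  obtain ⟨l, hl, hL⟩ : ∃ l, 1 < l ∧ Lac F ρ c l := by
    obtain ⟨ε, hε, hb⟩ := Metric.isOpen_iff.1 hUo 1 hU1
    refine ⟨1 + ε / 2, by linarith, ?_⟩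
    intro x y hne h hc h1
    by_contra hcon
    push Not at hcon
    refine hcol (mem_univ _) (mem_univ _) hne h (hb ?_) hc
    rw [Metric.mem_ball, Real.dist_eq, abs_lt]
    constructor <;> linarith
  let σ : X → X → ℝ := fun a b => ρ b a
  have hσ : IsCocycle F σ := hρF.flip hF
  have hLσ : Lac F σ c l := by
    intro x y hne h hc h1
    exact hL y x hne.symm (hF.symm h) hc.symm h1
  have hl1σ : ∀ x y, x ≠ y → F x y → c x = c y → σ x y ≠ 1 := fun x y hne h hc =>
    hl1 y x hne.symm (hF.symm h) hc.symm
  let Mx : X → Prop := fun z => ∀ z', F z z' → (c z' = c z → ρ z' z ≤ 1)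
  let Mn : X → Prop := fun z => ∀ z', F z z' → (c z' = c z → ρ z z' ≤ 1)
  have hMx : Measurable Mx := by
    refine mforall hFm hf hfF measurable_id ?_
    exact Measurable.imp (meq (hcm.comp measurable_snd) (hcm.comp measurable_fst))
      (mle (mcoc hρ.1 measurable_snd measurable_fst) measurable_const)
  have hMn : Measurable Mn := by
    refine mforall hFm hf hfF measurable_id ?_
    exact Measurable.imp (meq (hcm.comp measurable_snd) (hcm.comp measurable_fst))
      (mle (mcoc hρ.1 measurable_fst measurable_snd) measurable_const)
  let B' : Set X := {x | ∀ z, F x z → ¬ (Mx z ∨ Mn z)}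
  have hB'm : MeasurableSet B' := by
    refine measurableSet_setOfPred.2 (mforall hFm hf hfF measurable_id ?_)
    exact ((hMx.comp measurable_snd).or (hMn.comp measurable_snd)).not
  have hB'F : ∀ x y, F x y → x ∈ B' → y ∈ B' := fun x y h hx z hz => hx z (hF.trans h hz)
  let B : Set X := {x | ∀ z, E x z → z ∈ B'}
  have hBm : MeasurableSet B := by
    refine measurableSet_setOfPred.2 (mforall hE.2.1 hf hfs measurable_id ?_)
    exact mmem measurable_snd hB'm
  have hBE : EInvariant E B := fun x y h hx z hz => hx z (hEq.trans h hz)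
  have hBB : B ⊆ B' := fun x hx => hx x (hEq.refl x)
  -- the map to the complement of B'
  obtain ⟨r, hrm, hr⟩ := sel hf (p := fun n x => (x ∉ B → f n x ∉ B') ∧ (x ∈ B → n = 0))
    (fun n => measurableSet_setOfPred.2 (Measurable.and
      (Measurable.imp (mmem measurable_id hBm).not (mmem (hf n) hB'm).not)
      (Measurable.imp (mmem measurable_id hBm) measurable_const)))
    (by
      intro x
      by_cases hx : x ∈ B
      · exact ⟨0, fun h => absurd hx h, fun _ => rfl⟩
      · have : ∃ z, E x z ∧ z ∉ B' := by
          by_contra hcon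
          push Not at hcon
          exact hx hcon
        obtain ⟨z, hz, hzB⟩ := this
        obtain ⟨n, rfl⟩ := hfs x z hz
        exact ⟨n, fun _ => hzB, fun h => absurd h hx⟩)
  have hrE : ∀ x, E x (r x) := by
    intro x
    obtain ⟨n, _, _, h⟩ := hr x
    rw [h]; exact hfE n x
  have hrB : ∀ x ∈ B, r x = x := by
    intro x hx
    obtain ⟨n, h1, _, h⟩ := hr x
    rw [h, h1.2 hx, hf0]; rfl
  have hrB' : ∀ x ∉ B, r x ∉ B' := by
    intro x hx
    obtain ⟨n, h1, _, h⟩ := hr x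
    rw [h]; exact h1.1 hx
  have hrB2 : ∀ x ∉ B', r x = x := by
    intro x hx
    obtain ⟨n, h1, h2, h⟩ := hr x
    have hxB : x ∉ B := fun h => hx (hBB h)
    have : n = 0 := by
      by_contra hn
      refine h2 0 (by omega) ⟨fun _ => ?_, fun h => absurd h hxB⟩
      rw [hf0]; exact hx
    rw [h, this, hf0]; rfl
  let F2 : X → X → Prop := fun x y => (x ∈ B ↔ y ∈ B) ∧ F (r x) (r y)
  have hF2m : MeasurableSet {p : X × X | F2 p.1 p.2} := by
    refine measurableSet_setOfPred.2 (Measurable.and (Measurable.iff (mmem measurable_fst hBm)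
      (mmem measurable_snd hBm)) (mrel hFm (hrm.comp measurable_fst) (hrm.comp measurable_snd)))
  refine ⟨B, hBm, hBE, F2, ⟨fun x => ⟨Iff.rfl, hF.refl _⟩, fun h => ⟨h.1.symm, hF.symm h.2⟩,
    fun h h' => ⟨h.1.trans h'.1, hF.trans h.2 h'.2⟩⟩, hF2m, ?_, ?_, ?_, ?_⟩
  · intro x y h
    exact hEq.trans (hEq.trans (hrE x) (hFE h.2)) (hEq.symm (hrE y))
  · -- transversal
    classical
    let k : X → ℕ := fun z => 2 * c z + if Mx z then 0 else 1
    have hkm : Measurable k := by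
      refine Measurable.add (measurable_const.mul hcm) ?_
      exact Measurable.ite (measurableSet_setOfPred.2 hMx) measurable_const measurable_const
    let T0 : Set X := {z | (Mx z ∨ Mn z) ∧ ∀ z', F z z' → ((Mx z' ∨ Mn z') → k z ≤ k z')}
    have hT0B : ∀ z ∈ T0, z ∉ B' := fun z hz h => h z (hF.refl z) hz.1
    refine ⟨T0, ?_, ?_, ?_⟩
    · refine measurableSet_setOfPred.2 (Measurable.and (hMx.or hMn)
        (mforall hFm hf hfF measurable_id (Measurable.imp
        ((hMx.comp measurable_snd).or (hMn.comp measurable_snd)) ?_)))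
      exact measurableSet_setOfPred.1
        (measurableSet_le (hkm.comp measurable_fst) (hkm.comp measurable_snd))
    · intro z hz hB
      exact hT0B z hz (hBB hB)
    · intro x hx
      have hrx := hrB' x hx
      have hne : ∃ n, ∃ z, F (r x) z ∧ (Mx z ∨ Mn z) ∧ k z = n := by
        have : ∃ z, F (r x) z ∧ (Mx z ∨ Mn z) := by
          by_contra hcon
          push Not at hcon
          exact hrx fun z hz => by
            have := hcon z hz
            tauto
        obtain ⟨z, hz, hz'⟩ := this
        exact ⟨_, z, hz, hz', rfl⟩
      obtain ⟨z, hz1, hz2, hz3⟩ := Nat.find_spec hne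
      have hzT : z ∈ T0 := by
        refine ⟨hz2, fun z' hz' hm => ?_⟩
        rw [hz3]
        exact Nat.find_min' hne ⟨z', hF.trans hz1 hz', hm, rfl⟩
      have hTB : ∀ w ∈ T0, w ∉ B := fun w hw h => hT0B w hw (hBB h)
      refine ⟨z, ⟨hzT, ⟨⟨fun h => absurd h hx, fun h => absurd h (hTB z hzT)⟩, ?_⟩⟩, ?_⟩
      · rw [hrB2 z (hT0B z hzT)]; exact hz1
      · rintro w ⟨hw, -, hwF⟩
        rw [hrB2 w (hT0B w hw)] at hwF
        have hwz : F w z := hF.trans (hF.symm hwF) hz1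
        have hk : k w = k z := le_antisymm (hw.2 z hwz hz2) (hzT.2 w (hF.symm hwz) hw.1)
        have hcc : c w = c z := by
          simp only [k] at hk
          split_ifs at hk <;> omega
        have hpos := hρF.2.1 hwz
        have hmul := hρF.symm_mul hF hwz
        have hpos' := hρF.2.1 (hF.symm hwz)
        refine lac_eq hF hρF hl1 hwz hcc ?_
        by_cases hm : Mx w
        · have hm' : Mx z := by
            by_contra hm'
            simp only [k, hm, hm', if_true, if_false] at hk
            omega
          have h1 := hm z hwz hcc.symm
          have h2 := hm' w (hF.symm hwz) hcc
          nlinarith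
        · have hm' : ¬ Mx z := by
            intro hm'
            simp only [k, hm, hm', if_true, if_false] at hk
            omega
          have h1 := (hw.1.resolve_left hm) z hwz hcc.symm
          have h2 := (hz2.resolve_left hm') w (hF.symm hwz) hcc
          nlinarith
  · intro x hx
    have hrx := hrB' x hx
    have hsub : {y | F y (r x)} ⊆ {y | F2 y x ∧ y ∉ B} := by
      intro y hy
      have hyB' : y ∉ B' := fun h => hrx (hB'F _ _ hy h)
      have hyB : y ∉ B := fun h => hyB' (hBB h)
      refine ⟨⟨⟨fun h => absurd h hyB, fun h => absurd h hx⟩, ?_⟩, hyB⟩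
      rw [hrB2 y hyB']; exact hy
    refine top_le_iff.1 (le_trans ?_ (eSize_mono hsub x))
    rw [eSize_change (A := {y | F y (r x)}) hEq hρ (hEq.symm (hrE x)) (fun y hy => hFE hy), hinf,
      ENNReal.top_mul]
    have := hρ.2.1 (hEq.symm (hrE x))
    simpa using this
  · -- automorphism
    have hsuc : ∀ x ∈ B, ∃ y, IsSucc F ρ c x y := by
      intro x hx
      have h1 : ¬ Mx x := fun h => hBB hx x (hF.refl x) (Or.inl h)
      simp only [Mx] at h1
      push Not at h1
      obtain ⟨z, hz, hzc, hz1⟩ := h1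
      exact IsSucc.exists hF hρF hl hL hz hzc hz1
    have hpre : ∀ x ∈ B, ∃ y, IsSucc F σ c x y := by
      intro x hx
      have h1 : ¬ Mn x := fun h => hBB hx x (hF.refl x) (Or.inr h)
      simp only [Mn] at h1
      push Not at h1
      obtain ⟨z, hz, hzc, hz1⟩ := h1
      exact IsSucc.exists hF hσ hl hLσ hz hzc hz1
    have build : ∀ (τ : X → X → ℝ), Measurable (fun p : X × X => τ p.1 p.2) →
        (∀ x ∈ B, ∃ y, IsSucc F τ c x y) → ∃ T : X → X, Measurable T ∧
          (∀ x ∈ B, IsSucc F τ c x (T x)) ∧ ∀ x ∉ B, T x = x := by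
      intro τ hτ hex
      have hSm := IsSucc.measurable hFm hf hfF hτ hcm
      obtain ⟨T, hTm, hT⟩ := sel hf (p := fun n x => (x ∈ B → IsSucc F τ c x (f n x)) ∧
          (x ∉ B → n = 0))
        (fun n => measurableSet_setOfPred.2 (Measurable.and
          (Measurable.imp (mmem measurable_id hBm) (hSm.comp (measurable_id.prodMk (hf n))))
          (Measurable.imp (mmem measurable_id hBm).not measurable_const)))
        (by
          intro x
          by_cases hx : x ∈ B
          · obtain ⟨y, hy⟩ := hex x hx
            obtain ⟨n, rfl⟩ := hfF x y hy.1.1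
            exact ⟨n, fun _ => hy, fun h => absurd hx h⟩
          · exact ⟨0, fun h => absurd h hx, fun _ => rfl⟩)
      refine ⟨T, hTm, fun x hx => ?_, fun x hx => ?_⟩
      · obtain ⟨n, h1, _, h⟩ := hT x
        rw [h]; exact h1.1 hx
      · obtain ⟨n, h1, _, h⟩ := hT x
        rw [h, h1.2 hx, hf0]; rfl
    obtain ⟨T, hTm, hT1, hT2⟩ := build ρ hρ.1 hsuc
    obtain ⟨S, hSm, hS1, hS2⟩ := build σ hσ.1 hpre
    have hTB : ∀ x ∈ B, T x ∈ B := fun x hx => hBE (hFE (hT1 x hx).1.1) hx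
    have hSB : ∀ x ∈ B, S x ∈ B := fun x hx => hBE (hFE (hS1 x hx).1.1) hx
    have hST : ∀ x, S (T x) = x := by
      intro x
      by_cases hx : x ∈ B
      · exact IsSucc.unique hF hσ hl1σ (hS1 _ (hTB x hx)) ((hT1 x hx).flip hF hρF)
      · rw [hT2 x hx, hS2 x hx]
    have hTS : ∀ x, T (S x) = x := by
      intro x
      by_cases hx : x ∈ B
      · exact IsSucc.unique hF hρF hl1 (hT1 _ (hSB x hx)) ((hS1 x hx).flip hF hσ)
      · rw [hS2 x hx, hT2 x hx]
    refine ⟨⟨⟨T, S, hST, hTS⟩, hTm, hSm⟩, ?_, hSB, ?_⟩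
    · intro x hx
      refine ⟨hTB x hx, ⟨fun _ => hTB x hx, fun _ => hx⟩, ?_⟩
      change F (r x) (r (T x))
      rw [hrB x hx, hrB _ (hTB x hx)]
      exact (hT1 x hx).1.1
    · intro x hx
      have e : {y | y ∈ B ∧ (⟨⟨T, S, hST, hTS⟩, hTm, hSm⟩ : X ≃ᵐ X) y = x} = {S x} := by
        ext y
        constructor
        · rintro ⟨_, h⟩
          change T y = x at h
          rw [← h]
          exact (hST y).symm
        · rintro rfl
          exact ⟨hSB x hx, hTS x⟩
      rw [e, eSize_singleton, ← ENNReal.ofReal_one, ENNReal.ofReal_lt_ofReal_iff one_pos]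
      have h1 := (hS1 x hx).1.2.2
      have h2 := hρF.symm_mul hF (hS1 x hx).1.1
      change 1 < ρ x (S x) at h1
      have h3 := hρF.2.1 (hF.symm (hS1 x hx).1.1)
      nlinarith

end TwoThree

section ThreeOne
variable {X : Type*} [MeasurableSpace X]

lemma eSize_enum2 {ρ : X → X → ℝ} (f : ℕ → X → X) (t x : X) (A : Set X)
    (hA : ∀ y ∈ A, ∃ n, f n t = y) (g : ℕ → ℝ≥0∞)
    (h1 : ∀ n, (f n t ∈ A ∧ ∀ m < n, f m t ≠ f n t) → g n = ENNReal.ofReal (ρ (f n t) x))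
    (h2 : ∀ n, ¬ (f n t ∈ A ∧ ∀ m < n, f m t ≠ f n t) → g n = 0) :
    eSize ρ A x = ∑' n, g n := by
  rw [eSize_enum f t x A hA]
  refine tsum_congr fun n => ?_
  split_ifs with h
  · rw [h1 n h]
  · rw [h2 n h]

lemma mk_one (E : X → X → Prop) (hE : Equivalence E) (ρ : X → X → ℝ)
    (F : X → X → Prop) (hF : IsFinSubequiv E F) (ψ : X → X) (hψ : Measurable ψ)
    (hiff : ∀ x y, F (ψ x) (ψ y) ↔ F x y) (hψE : ∀ x, E x (ψ x))
    (h2 : ∀ x, eSize ρ {y | F (ψ y) x} x ≤ eSize ρ {y | F y x} x)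
    (h3 : ∀ x, ∃ y, E x y ∧ eSize ρ {z | F (ψ z) y} y < eSize ρ {z | F z y} y) :
    (∃ (F : X → X → Prop) (hF : Equivalence F), IsFinSubequiv E F ∧
        ∃ φ : Quotient (Setoid.mk F hF) → Quotient (Setoid.mk F hF),
          Measurable φ ∧ Function.Injective φ ∧
          QuotCompressionOn E ρ Set.univ (Setoid.mk F hF) φ) := by
  refine ⟨F, hF.1, hF, ?_⟩
  letI s : Setoid X := Setoid.mk F hF.1
  have hmk : ∀ x y : X, Quotient.mk s x = Quotient.mk s y ↔ F x y := fun x y =>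
    ⟨fun h => Quotient.exact h, fun h => Quotient.sound h⟩
  let φ : Quotient s → Quotient s :=
    Quotient.map ψ (fun x y (h : F x y) => ((hiff x y).2 h : F (ψ x) (ψ y)))
  have hφ : ∀ x, φ (Quotient.mk s x) = Quotient.mk s (ψ x) := fun x => rfl
  refine ⟨φ, ?_, ?_, ?_, ?_, ?_⟩
  · apply measurable_from_quotient.2
    exact measurable_quotient_mk'.comp hψ
  · intro p q
    induction p using Quotient.inductionOn with | h x => ?_
    induction q using Quotient.inductionOn with | h y => ?_
    intro h
    rw [hφ, hφ, hmk, hiff] at h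
    exact (hmk _ _).2 h
  · intro x _ y hy
    rw [hφ, hmk] at hy
    exact ⟨hE.trans (hψE x) (hF.2.2.1 hy), mem_univ _⟩
  · intro x _
    have : {y | y ∈ (univ : Set X) ∧ φ (Quotient.mk s y) = Quotient.mk s x} = {y | F (ψ y) x} := by
      ext y
      simp only [mem_univ, true_and, mem_setOf_eq, hφ, hmk]
    rw [this]
    exact ENNReal.div_le_of_le_mul (by rw [one_mul]; exact h2 x)
  · intro x _
    obtain ⟨y, hy, hlt⟩ := h3 x
    refine ⟨y, mem_univ _, hy, ?_⟩
    have : {z | z ∈ (univ : Set X) ∧ φ (Quotient.mk s z) = Quotient.mk s y} = {z | F (ψ z) y} := by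
      ext y
      simp only [mem_univ, true_and, mem_setOf_eq, hφ, hmk]
    rw [this]
    exact ENNReal.div_lt_of_lt_mul (by rw [one_mul]; exact hlt)

open Classical in
theorem three_one [StandardBorelSpace X]
    (E : X → X → Prop) (hE : IsCBER E)
    (ρ : X → X → ℝ) (hρ : IsCocycle E ρ) :
      (∃ B : Set X, MeasurableSet B ∧ EInvariant E B ∧
        ∃ F : X → X → Prop, Equivalence F ∧ MeasurableSet {p : X × X | F p.1 p.2} ∧
          (∀ ⦃x y : X⦄, F x y → E x y) ∧
          (∃ T : Set X, MeasurableSet T ∧ T ⊆ Bᶜ ∧ ∀ x ∈ Bᶜ, ∃! y, y ∈ T ∧ F x y) ∧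
          (∀ x ∉ B, eSize ρ {y | F y x ∧ y ∉ B} x = ⊤) ∧
          (∃ T : X ≃ᵐ X, (∀ x ∈ B, T x ∈ B ∧ F x (T x)) ∧ (∀ x ∈ B, T.symm x ∈ B) ∧
            ∀ x ∈ B, eSize ρ {y | y ∈ B ∧ T y = x} x < 1)) →
    (∃ (F : X → X → Prop) (hF : Equivalence F), IsFinSubequiv E F ∧
        ∃ φ : Quotient (Setoid.mk F hF) → Quotient (Setoid.mk F hF),
          Measurable φ ∧ Function.Injective φ ∧
          QuotCompressionOn E ρ Set.univ (Setoid.mk F hF) φ) := by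
  rintro ⟨B, hB, hBE, F, hF, hFm, hFE, ⟨T0, hT0, hT0B, hT0u⟩, hinf, T, hTB, hTsB, hTs⟩
  obtain ⟨f, hf, hf0, hfE, hfs⟩ := lusin_novikov E hE
  have hEq := hE.1
  have hfF : ∀ x y, F x y → ∃ n, f n x = y := fun x y h => hfs x y (hFE h)
  have hBF : ∀ x y, F x y → (x ∈ B ↔ y ∈ B) := fun x y h =>
    ⟨fun hx => hBE (hFE h) hx, fun hy => hBE (hFE (hF.symm h)) hy⟩
  -- the transversal map
  obtain ⟨t, htm, ht⟩ := sel (f := f) hf (p := fun n x => x ∈ B ∨ (f n x ∈ T0 ∧ F x (f n x)))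
    (fun n => measurableSet_setOfPred.2 ((mmem measurable_id hB).or
      ((mmem (hf n) hT0).and (mrel hFm measurable_id (hf n))))) (by
      intro x
      by_cases hx : x ∈ B
      · exact ⟨0, Or.inl hx⟩
      · obtain ⟨y, ⟨hy, hxy⟩, -⟩ := hT0u x hx
        obtain ⟨n, rfl⟩ := hfF x y hxy
        exact ⟨n, Or.inr ⟨hy, hxy⟩⟩)
  have ht1 : ∀ x ∉ B, t x ∈ T0 ∧ F x (t x) := by
    intro x hx
    obtain ⟨n, h, -, h'⟩ := ht x
    rw [h']
    exact h.resolve_left hx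
  have htB : ∀ x ∉ B, t x ∉ B := fun x hx h => hx ((hBF _ _ (ht1 x hx).2).2 h)
  have ht2 : ∀ x ∉ B, ∀ y, F x y → t y = t x := by
    intro x hx y hxy
    have hy : y ∉ B := fun h => hx ((hBF _ _ hxy).2 h)
    exact (hT0u x hx).unique ⟨(ht1 y hy).1, hF.trans hxy (ht1 y hy).2⟩ (ht1 x hx)
  have ht3 : ∀ x ∉ B, ∀ y ∉ B, t x = t y → F x y := by
    intro x hx y hy h
    have h1 := (ht1 x hx).2
    rw [h] at h1
    exact hF.trans h1 (hF.symm (ht1 y hy).2)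
  have htt : ∀ x ∉ B, t (t x) = t x := fun x hx => ht2 x hx _ (ht1 x hx).2
  -- index
  obtain ⟨idx, hidxm, hidx⟩ := sel (f := fun n (_ : X) => n) (fun n => measurable_const)
    (p := fun n x => x ∈ B ∨ f n (t x) = x)
    (fun n => measurableSet_setOfPred.2 ((mmem measurable_id hB).or
      (meq ((hf n).comp htm) measurable_id))) (by
      intro x
      by_cases hx : x ∈ B
      · exact ⟨0, Or.inl hx⟩
      · obtain ⟨n, hn⟩ := hfF _ _ (hF.symm (ht1 x hx).2)
        exact ⟨n, Or.inr hn⟩)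
  have hidx1 : ∀ x ∉ B, f (idx x) (t x) = x ∧ ∀ m < idx x, f m (t x) ≠ x := by
    intro x hx
    obtain ⟨n, h, h', h''⟩ := hidx x
    rw [h'']
    exact ⟨h.resolve_left hx, fun m hm h => h' m hm (Or.inr h)⟩
  -- weights
  let V : ℕ → X → Prop := fun n t => F t (f n t) ∧ ∀ m < n, f m t ≠ f n t
  have hV : ∀ n, Measurable (V n) := fun n => (mrel hFm measurable_id (hf n)).and
    (Measurable.forall fun m => Measurable.forall fun _ => (meq (hf m) (hf n)).not)
  let w : ℕ → X → ℝ := fun n t => if V n t then ρ (f n t) t else 0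
  have hwm : ∀ n, Measurable (w n) := fun n =>
    Measurable.ite (measurableSet_setOfPred.2 (hV n)) (mcoc hρ.1 (hf n) measurable_id) measurable_const
  have hw0 : ∀ n t, 0 ≤ w n t := by
    intro n t
    by_cases h : V n t
    · simp only [w, h, if_true]
      exact (hρ.2.1 (hEq.symm (hFE h.1))).le
    · simp only [w, h, if_false]; exact le_rfl
  let P : ℕ → X → ℝ := fun a t => ∑ n ∈ Finset.range a, w n t
  have hPm : ∀ a, Measurable (P a) := fun a => Finset.measurable_sum _ (fun n _ => hwm n)
  have hPmono : ∀ t, Monotone fun a => P a t := by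
    intro t
    apply monotone_nat_of_le_succ
    intro n
    simp only [P, Finset.sum_range_succ]
    linarith [hw0 n t]
  have hPunb : ∀ t ∉ B, ∀ C, ∃ a, C ≤ P a t := by
    intro t htb C
    by_contra hcon
    push Not at hcon
    have h1 := hinf t htb
    have h2 : ∀ n, (f n t ∈ {y | F y t ∧ y ∉ B} ∧ ∀ m < n, f m t ≠ f n t) ↔ V n t := by
      intro n
      simp only [mem_setOf_eq, V]
      constructor
      · rintro ⟨⟨h, -⟩, h'⟩; exact ⟨hF.symm h, h'⟩
      · rintro ⟨h, h'⟩; exact ⟨⟨hF.symm h, fun h2 => htb ((hBF _ _ h).2 h2)⟩, h'⟩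
    rw [eSize_enum2 f t t _ (fun y hy => hfF t y (hF.symm hy.1)) (fun n => ENNReal.ofReal (w n t))
      (fun n h => by have := (h2 n).1 h; simp only [w, this, if_true])
      (fun n h => by
        have : ¬ V n t := fun h' => h ((h2 n).2 h')
        simp only [w, this, if_false, ENNReal.ofReal_zero]),
      ENNReal.tsum_eq_iSup_nat] at h1
    have h3 : ⨆ i, ∑ n ∈ Finset.range i, ENNReal.ofReal (w n t) ≤ ENNReal.ofReal C := by
      apply iSup_le
      intro i
      rw [← ENNReal.ofReal_sum_of_nonneg (fun n _ => hw0 n t)]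
      exact ENNReal.ofReal_le_ofReal (hcon i).le
    rw [h1] at h3
    exact ENNReal.ofReal_ne_top (top_le_iff.1 h3)
  -- block boundaries
  have step : ∀ g : {g : X → ℕ // Measurable g}, ∃ g' : {g : X → ℕ // Measurable g},
      ∀ t ∉ B, 2 * P (g.1 t) t + 1 ≤ P (g'.1 t) t := by
    rintro ⟨g, hg⟩
    have hPg : Measurable fun t => P (g t) t := by
      have : (fun t => P (g t) t) = (fun p : X × ℕ => P p.2 p.1) ∘ (fun t => (t, g t)) := rfl
      rw [this]
      exact (measurable_from_prod_countable_left (fun n => hPm n)).comp (measurable_id.prodMk hg)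
    obtain ⟨r, hr, hr'⟩ := sel (f := fun n (_ : X) => n) (fun n => measurable_const)
      (p := fun n t => t ∈ B ∨ 2 * P (g t) t + 1 ≤ P n t)
      (fun n => measurableSet_setOfPred.2 ((mmem measurable_id hB).or
        (mle ((hPg.const_mul 2).add_const 1) (hPm n)))) (by
        intro t
        by_cases hx : t ∈ B
        · exact ⟨0, Or.inl hx⟩
        · obtain ⟨n, hn⟩ := hPunb t hx (2 * P (g t) t + 1)
          exact ⟨n, Or.inr hn⟩)
    refine ⟨⟨r, hr⟩, fun t ht => ?_⟩
    obtain ⟨n, h, -, h'⟩ := hr' t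
    show 2 * P (g t) t + 1 ≤ P (r t) t
    rw [h']
    exact h.resolve_left ht
  choose next hnext using step
  let a' : ℕ → {g : X → ℕ // Measurable g} := fun k =>
    Nat.rec ⟨fun _ => 0, measurable_const⟩ (fun _ g => next g) k
  let a : ℕ → X → ℕ := fun k => (a' k).1
  have ham : ∀ k, Measurable (a k) := fun k => (a' k).2
  have ha0 : ∀ t, a 0 t = 0 := fun t => rfl
  have haP : ∀ k, ∀ t ∉ B, 2 * P (a k t) t + 1 ≤ P (a (k+1) t) t := fun k t ht => hnext (a' k) t ht
  have hP0 : ∀ n t, 0 ≤ P n t := fun n t => Finset.sum_nonneg fun i _ => hw0 i t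
  have halt : ∀ k, ∀ t ∉ B, a k t < a (k+1) t := by
    intro k t ht
    by_contra h
    push Not at h
    have h1 := hPmono t h
    have h2 := haP k t ht
    have h3 := hP0 (a k t) t
    simp only at h1
    linarith
  have hamono : ∀ t ∉ B, StrictMono fun k => a k t := fun t ht => strictMono_nat_of_lt_succ fun k => halt k t ht
  obtain ⟨K, hKm, hK⟩ := sel (f := fun n (_ : X) => n) (fun n => measurable_const)
    (p := fun k x => x ∈ B ∨ idx x < a (k+1) (t x))
    (fun k => measurableSet_setOfPred.2 ((mmem measurable_id hB).or
      (measurableSet_setOfPred.1 (measurableSet_lt hidxm ((ham (k+1)).comp htm))))) (by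
      intro x
      by_cases hx : x ∈ B
      · exact ⟨0, Or.inl hx⟩
      · refine ⟨idx x, Or.inr ?_⟩
        exact lt_of_lt_of_le (Nat.lt_succ_self _) ((hamono _ (htB x hx)).id_le _))
  have hK1 : ∀ x ∉ B, ∀ k, K x = k ↔ a k (t x) ≤ idx x ∧ idx x < a (k+1) (t x) := by
    intro x hx
    obtain ⟨k, h1, h2, h3⟩ := hK x
    have h1' := h1.resolve_left hx
    have h2' : ∀ m < k, a (m+1) (t x) ≤ idx x := fun m hm => by
      by_contra hc
      push Not at hc
      exact h2 m hm (Or.inr hc)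
    have hk : a k (t x) ≤ idx x := by
      rcases k with _ | k
      · exact Nat.zero_le _
      · exact h2' k (Nat.lt_succ_self k)
    intro j
    rw [h3]
    constructor
    · rintro rfl
      exact ⟨hk, h1'⟩
    · rintro ⟨h4, h5⟩
      have hm := hamono _ (htB x hx)
      have e1 : k < j + 1 := hm.lt_iff_lt.1 (lt_of_le_of_lt hk h5)
      have e2 : j < k + 1 := hm.lt_iff_lt.1 (lt_of_le_of_lt h4 h1')
      omega
  -- valid points
  have hVy : ∀ x ∉ B, ∀ n, V n (t x) → f n (t x) ∉ B ∧ t (f n (t x)) = t x ∧ idx (f n (t x)) = n := by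
    intro x hx n hv
    have h1 : f n (t x) ∉ B := fun h => htB x hx ((hBF _ _ hv.1).2 h)
    have h2 : t (f n (t x)) = t x := by
      rw [ht2 (t x) (htB x hx) _ hv.1, htt x hx]
    refine ⟨h1, h2, ?_⟩
    have h3 := hidx1 _ h1
    rw [h2] at h3
    rcases lt_trichotomy (idx (f n (t x))) n with h | h | h
    · exact absurd h3.1 (hv.2 _ h)
    · exact h
    · exact absurd rfl (h3.2 _ h)
  -- block sizes
  let C : X → ℕ → Set X := fun x k => {y | y ∉ B ∧ t y = t x ∧ K y = k}
  have hC : ∀ x ∉ B, ∀ k, eSize ρ (C x k) (t x) =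
      ENNReal.ofReal (P (a (k+1) (t x)) (t x) - P (a k (t x)) (t x)) := by
    intro x hx k
    rw [eSize_enum2 f (t x) (t x) (C x k) (fun y hy => hfF _ _ (hF.symm (by
      have := (ht1 y hy.1).2
      rwa [hy.2.1] at this)))
      (fun n => if n ∈ Finset.Ico (a k (t x)) (a (k+1) (t x)) then ENNReal.ofReal (w n (t x)) else 0)]
    · rw [tsum_eq_sum (s := Finset.Ico (a k (t x)) (a (k+1) (t x)))
        (fun n hn => by rw [if_neg hn]), Finset.sum_congr rfl (fun n hn => if_pos hn),
        ← ENNReal.ofReal_sum_of_nonneg (fun n _ => hw0 n (t x)),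
        Finset.sum_Ico_eq_sub _ (halt k _ (htB x hx)).le]
    · rintro n ⟨⟨h1, h2, h3⟩, h4⟩
      have hv : V n (t x) := by
        refine ⟨?_, h4⟩
        have := (ht1 _ h1).2
        rw [h2] at this
        exact hF.symm this
      have := (hK1 _ h1 _).1 h3
      rw [h2, (hVy x hx n hv).2.2] at this
      rw [if_pos (Finset.mem_Ico.2 this)]
      simp only [w, hv, if_true]
    · intro n h
      by_cases hv : V n (t x)
      · rw [if_neg]
        intro hn
        apply h
        obtain ⟨e1, e2, e3⟩ := hVy x hx n hv
        refine ⟨⟨e1, e2, ?_⟩, hv.2⟩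
        rw [hK1 _ e1, e2, e3]
        exact Finset.mem_Ico.1 hn
      · simp only [w, hv, if_false, ENNReal.ofReal_zero, ite_self]
  -- next block map
  obtain ⟨ψ0, hψ0m, hψ0⟩ := sel (f := fun n x => f n (t x)) (fun n => (hf n).comp htm)
    (p := fun n x => x ∈ B ∨ (F (t x) (f n (t x)) ∧ K (f n (t x)) = K x + 1))
    (fun n => measurableSet_setOfPred.2 ((mmem measurable_id hB).or
      ((mrel hFm htm ((hf n).comp htm)).and
        (meq (hKm.comp ((hf n).comp htm)) (hKm.add_const 1))))) (by
      intro x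
      by_cases hx : x ∈ B
      · exact ⟨0, Or.inl hx⟩
      · by_contra hcon
        push Not at hcon
        have he : C x (K x + 1) = ∅ := by
          apply Set.eq_empty_iff_forall_notMem.2
          rintro y ⟨h1, h2, h3⟩
          have h4 : F (t x) y := by
            have := (ht1 y h1).2
            rw [h2] at this
            exact hF.symm this
          obtain ⟨n, rfl⟩ := hfF _ _ h4
          exact (hcon n).2 h4 h3
        have h1 := hC x hx (K x + 1)
        rw [he, eSize_empty] at h1
        have h2 := ENNReal.ofReal_eq_zero.1 h1.symm
        have h3 := haP (K x + 1) _ (htB x hx)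
        have h4 := hP0 (a (K x + 1) (t x)) (t x)
        linarith)
  let ψ : X → X := fun x => if x ∈ B then T x else ψ0 x
  have hψm : Measurable ψ := Measurable.ite hB T.measurable hψ0m
  have hψB : ∀ x ∈ B, ψ x = T x := fun x hx => if_pos hx
  have hψn : ∀ x ∉ B, F x (ψ x) ∧ ψ x ∉ B ∧ t (ψ x) = t x ∧ K (ψ x) = K x + 1 := by
    intro x hx
    have e : ψ x = ψ0 x := if_neg hx
    obtain ⟨n, h1, -, h2⟩ := hψ0 x
    obtain ⟨h3, h4⟩ := h1.resolve_left hx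
    rw [e]
    rw [← h2] at h3 h4
    have h5 := hF.trans (ht1 x hx).2 h3
    exact ⟨h5, fun h => hx ((hBF _ _ h5).2 h), ht2 x hx _ h5, h4⟩
  -- the relation
  let F' : X → X → Prop := fun x y => x = y ∨ (x ∉ B ∧ y ∉ B ∧ t x = t y ∧ K x = K y)
  have hF'B : ∀ x y, x ∈ B → (F' y x ↔ y = x) := by
    intro x y hx
    constructor
    · rintro (h | ⟨-, h, -⟩)
      · exact h
      · exact absurd hx h
    · exact fun h => Or.inl h
  have hF'n : ∀ x y, x ∉ B → (F' y x ↔ y ∉ B ∧ t y = t x ∧ K y = K x) := by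
    intro x y hx
    constructor
    · rintro (rfl | ⟨h1, -, h2⟩)
      · exact ⟨hx, rfl, rfl⟩
      · exact ⟨h1, h2⟩
    · exact fun h => Or.inr ⟨h.1, hx, h.2⟩
  have hF'symm : ∀ x y, F' x y → F' y x := by
    rintro x y (rfl | ⟨h1, h2, h3, h4⟩)
    · exact Or.inl rfl
    · exact Or.inr ⟨h2, h1, h3.symm, h4.symm⟩
  have hF'F : ∀ x y, F' x y → F x y := by
    rintro x y (rfl | ⟨h1, h2, h3, h4⟩)
    · exact hF.refl x
    · exact ht3 x h1 y h2 h3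
  have hF'eq : Equivalence F' := by
    refine ⟨fun x => Or.inl rfl, fun {x y} h => hF'symm x y h, ?_⟩
    rintro x y z (rfl | ⟨h1, h2, h3, h4⟩) (rfl | ⟨h1', h2', h3', h4'⟩)
    · exact Or.inl rfl
    · exact Or.inr ⟨h1', h2', h3', h4'⟩
    · exact Or.inr ⟨h1, h2, h3, h4⟩
    · exact Or.inr ⟨h1, h2', h3.trans h3', h4.trans h4'⟩
  have hfin : IsFinSubequiv E F' := by
    refine ⟨hF'eq, ?_, fun x y h => hFE (hF'F x y h), ?_⟩
    · apply measurableSet_setOfPred.2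
      exact (meq measurable_fst measurable_snd).or ((mmem measurable_fst hB).not.and
        ((mmem measurable_snd hB).not.and ((meq (htm.comp measurable_fst) (htm.comp measurable_snd)).and
        (meq (hKm.comp measurable_fst) (hKm.comp measurable_snd)))))
    · intro x
      by_cases hx : x ∈ B
      · refine (finite_singleton x).subset fun y hy => ?_
        exact (hF'B x y hx).1 (hF'symm _ _ hy)
      · refine ((finite_Iio (a (K x + 1) (t x))).image (fun n => f n (t x))).subset fun y hy => ?_
        obtain ⟨h1, h2, h3⟩ := (hF'n x y hx).1 (hF'symm _ _ hy)
        refine ⟨idx y, ?_, ?_⟩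
        · have := ((hK1 y h1 _).1 h3).2
          rwa [h2] at this
        · have := (hidx1 y h1).1
          rwa [h2] at this
  have hEt : ∀ x ∉ B, E (t x) x := fun x hx => hFE (hF.symm (ht1 x hx).2)
  have hCE : ∀ x ∉ B, ∀ k, ∀ y ∈ C x k, E y (t x) := by
    rintro x hx k y ⟨h1, h2, -⟩
    rw [← h2]
    exact hFE (ht1 y h1).2
  -- size facts
  have hszB : ∀ x ∈ B, eSize ρ {y | F' (ψ y) x} x < eSize ρ {y | F' y x} x := by
    intro x hx
    have e1 : {y | F' y x} = {x} := by
      ext y; exact hF'B x y hx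
    have e2 : {y | F' (ψ y) x} = {y | y ∈ B ∧ T y = x} := by
      ext y
      simp only [mem_setOf_eq]
      rw [hF'B x _ hx]
      constructor
      · intro h
        by_cases hy : y ∈ B
        · exact ⟨hy, by rw [← hψB y hy]; exact h⟩
        · exact absurd (h ▸ hx) (hψn y hy).2.1
      · rintro ⟨h1, h2⟩
        rw [hψB y h1]; exact h2
    rw [e1, e2, eSize_singleton, hρ.self hEq, ENNReal.ofReal_one]
    exact hTs x hx
  have hpre : ∀ x ∉ B, ∀ y, F' (ψ y) x ↔ y ∉ B ∧ t y = t x ∧ K y + 1 = K x := by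
    intro x hx y
    rw [hF'n x _ hx]
    by_cases hy : y ∈ B
    · simp only [hy, not_true_eq_false, false_and, iff_false, not_and]
      intro h
      rw [hψB y hy] at h
      exact absurd (hTB y hy).1 h
    · obtain ⟨h1, h2, h3, h4⟩ := hψn y hy
      rw [h3, h4]
      simp only [h2, hy, not_false_eq_true, true_and]
  have hszn : ∀ x ∉ B, eSize ρ {y | F' (ψ y) x} x ≤ eSize ρ {y | F' y x} x := by
    intro x hx
    have e1 : {y | F' y x} = C x (K x) := by
      ext y; exact hF'n x y hx
    rcases hk : K x with _ | k
    · have e2 : {y | F' (ψ y) x} = ∅ := by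
        apply Set.eq_empty_iff_forall_notMem.2
        intro y hy
        have := ((hpre x hx y).1 hy).2.2
        omega
      rw [e2, eSize_empty]; exact zero_le
    · have e2 : {y | F' (ψ y) x} = C x k := by
        ext y
        simp only [mem_setOf_eq, C]
        rw [hpre x hx, hk]
        simp
      rw [e1, e2, hk, eSize_change hEq hρ (hEt x hx) (hCE x hx k),
        eSize_change hEq hρ (hEt x hx) (hCE x hx (k+1)), hC x hx, hC x hx]
      refine mul_le_mul' (ENNReal.ofReal_le_ofReal ?_) le_rfl
      have h1 := haP (k+1) _ (htB x hx)
      have h2 := hP0 (a k (t x)) (t x)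
      linarith
  refine mk_one E hEq ρ F' hfin ψ hψm ?_ ?_ ?_ ?_
  · intro x y
    by_cases hy : y ∈ B
    · have h1 : ψ y ∈ B := by rw [hψB y hy]; exact (hTB y hy).1
      rw [hF'B _ _ h1, hF'B _ _ hy]
      constructor
      · intro h
        by_cases hx : x ∈ B
        · rw [hψB y hy, hψB x hx] at h
          exact T.injective h
        · exact absurd (h ▸ h1) (hψn x hx).2.1
      · rintro rfl; rfl
    · obtain ⟨h1, h2, h3, h4⟩ := hψn y hy
      rw [hpre _ h2, h3, h4, hF'n _ _ hy]
      simp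
  · intro x
    by_cases hx : x ∈ B
    · rw [hψB x hx]; exact hFE (hTB x hx).2
    · exact hFE (hψn x hx).1
  · intro x
    by_cases hx : x ∈ B
    · exact (hszB x hx).le
    · exact hszn x hx
  · intro x
    by_cases hx : x ∈ B
    · exact ⟨x, hEq.refl x, hszB x hx⟩
    · refine ⟨t x, hEq.symm (hEt x hx), ?_⟩
      have hi : idx (t x) = 0 := by
        have h := (hidx1 (t x) (htB x hx)).2 0
        rw [htt x hx, hf0] at h
        by_contra h0
        exact h (Nat.pos_of_ne_zero h0) rfl
      have hk : K (t x) = 0 := by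
        rw [hK1 _ (htB x hx), hi, htt x hx]
        refine ⟨Nat.zero_le _, ?_⟩
        have := halt 0 _ (htB x hx)
        rwa [ha0] at this
      have e2 : {y | F' (ψ y) (t x)} = ∅ := by
        apply Set.eq_empty_iff_forall_notMem.2
        intro y hy
        have := ((hpre (t x) (htB x hx) y).1 hy).2.2
        omega
      rw [e2, eSize_empty]
      have : eSize ρ {t x} (t x) ≤ eSize ρ {z | F' z (t x)} (t x) :=
        eSize_mono (by rintro y rfl; exact Or.inl rfl) _
      refine lt_of_lt_of_le ?_ this
      rw [eSize_singleton, hρ.self hEq]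
      simp

end ThreeOne

section Core
variable {X : Type*}

/-- tail equivalence of a function -/
def Tail (ψ : X → X) (x y : X) : Prop := ∃ m n : ℕ, ψ^[m] x = ψ^[n] y

lemma Tail.equiv (ψ : X → X) : Equivalence (Tail ψ) := by
  refine ⟨fun x => ⟨0, 0, rfl⟩, fun ⟨m, n, h⟩ => ⟨n, m, h.symm⟩, ?_⟩
  rintro x y z ⟨m, n, h⟩ ⟨p, q, h'⟩
  refine ⟨p + m, n + q, ?_⟩
  rw [Function.iterate_add_apply, h, ← Function.iterate_add_apply, add_comm,
    Function.iterate_add_apply, h', ← Function.iterate_add_apply]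

lemma Tail.iter (ψ : X → X) (k : ℕ) (x : X) : Tail ψ x (ψ^[k] x) := ⟨k, 0, rfl⟩

lemma Tail.lin {ψ : X → X} (hinj : Function.Injective ψ) {x y : X} (h : Tail ψ x y) :
    (∃ k, ψ^[k] x = y) ∨ ∃ k, ψ^[k] y = x := by
  obtain ⟨m, n, h⟩ := h
  rcases le_total m n with hmn | hmn
  · right
    refine ⟨n - m, ?_⟩
    apply hinj.iterate m
    rw [← Function.iterate_add_apply, Nat.add_sub_cancel' hmn, h]
  · left
    refine ⟨m - n, ?_⟩
    apply hinj.iterate n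
    rw [← Function.iterate_add_apply, Nat.add_sub_cancel' hmn, h]

lemma iter_E {E : X → X → Prop} (hE : Equivalence E) {ψ : X → X} (h : ∀ x, E x (ψ x)) (k : ℕ) (x : X) :
    E x (ψ^[k] x) := by
  induction k with
  | zero => exact hE.refl x
  | succ k ih => rw [Function.iterate_succ_apply']; exact hE.trans ih (h _)

lemma Tail.E {E : X → X → Prop} (hE : Equivalence E) {ψ : X → X} (h : ∀ x, E x (ψ x)) {x y : X}
    (hxy : Tail ψ x y) : E x y := by
  obtain ⟨m, n, e⟩ := hxy
  have h1 := iter_E hE h m x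
  rw [e] at h1
  exact hE.trans h1 (hE.symm (iter_E hE h n y))

lemma Tail.meas [MeasurableSpace X] [StandardBorelSpace X] {ψ : X → X} (hψ : Measurable ψ) :
    MeasurableSet {p : X × X | Tail ψ p.1 p.2} := by
  apply measurableSet_setOfPred.2
  refine Measurable.exists fun m => Measurable.exists fun n => ?_
  exact meq ((hψ.iterate m).comp measurable_fst) ((hψ.iterate n).comp measurable_snd)

lemma iter_mono [MeasurableSpace X] {E : X → X → Prop} (hE : Equivalence E) {τ : X → X → ℝ}
    (hτ : IsCocycle E τ) {ψ : X → X}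
    (h : ∀ x, E x (ψ x)) (h1 : ∀ x, 1 ≤ τ (ψ x) x) (k : ℕ) (x : X) : 1 ≤ τ (ψ^[k] x) x := by
  induction k with
  | zero => exact (hτ.self hE x).ge
  | succ k ih =>
    rw [Function.iterate_succ_apply', hτ.2.2 (hE.symm (h _)) (hE.symm (iter_E hE h k x))]
    exact one_le_mul_of_one_le_of_one_le (h1 _) ih

lemma color_of_family [MeasurableSpace X] {ι : Type*} [Countable ι] [Nonempty ι]
    (S : Set X) (hS : MeasurableSet S) (p : ι → X → Prop) (hp : ∀ i, Measurable (p i))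
    (hex : ∀ x ∈ S, ∃ i, p i x) (G : X → X → Prop)
    (hG : ∀ i x y, p i x → p i y → G x y → False) :
    ∃ c : X → ℕ, Measurable c ∧ ∀ x y, x ∈ S → y ∈ S → G x y → c x ≠ c y := by
  obtain ⟨e, he⟩ := exists_surjective_nat ι
  obtain ⟨c, hc, hc'⟩ := sel (f := fun n (_ : X) => n) (fun n => measurable_const)
    (p := fun n x => x ∉ S ∨ p (e n) x)
    (fun n => measurableSet_setOfPred.2 ((mmem measurable_id hS).not.or (hp _))) (by
      intro x
      by_cases hx : x ∈ S
      · obtain ⟨i, hi⟩ := hex x hx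
        obtain ⟨n, rfl⟩ := he i
        exact ⟨n, Or.inr hi⟩
      · exact ⟨0, Or.inl hx⟩)
  refine ⟨c, hc, fun x y hx hy hxy h => ?_⟩
  obtain ⟨n, h1, -, h2⟩ := hc' x
  obtain ⟨m, h3, -, h4⟩ := hc' y
  have h1' := h1.resolve_left (not_not.2 hx)
  have h3' := h3.resolve_left (not_not.2 hy)
  have : n = m := by rw [← h2, ← h4, h]
  subst this
  exact hG _ _ _ h1' h3' hxy

variable [MeasurableSpace X]

/-- class witnesses -/
def Bad (τ : X → X → ℝ) (ψ : X → X) (z : X) : Prop := (∀ u, ψ u ≠ z) ∨ 1 < τ (ψ z) z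

lemma bad_meas [StandardBorelSpace X] {E : X → X → Prop} (hE : IsCBER E) {τ : X → X → ℝ}
    (hτ : IsCocycle E τ) {ψ : X → X} (hψ : Measurable ψ) (hψE : ∀ x, E x (ψ x)) :
    MeasurableSet {x | ∃ z, Tail ψ x z ∧ Bad τ ψ z} := by
  obtain ⟨f, hf, hf0, hfE, hfs⟩ := lusin_novikov E hE
  apply measurableSet_setOfPred.2
  refine mexists (Tail.meas hψ) hf (fun x y h => hfs x y (Tail.E hE.1 hψE h)) measurable_id
    (Q := fun _ z => Bad τ ψ z) ?_
  refine Measurable.or ?_ (mlt measurable_const (mcoc hτ.1 (hψ.comp measurable_snd) measurable_snd))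
  have : (fun p : X × X => ∀ u, ψ u ≠ p.2) = fun p : X × X => ∀ u, E p.2 u → ψ u ≠ p.2 := by
    funext p
    apply propext
    constructor
    · intro h u _; exact h u
    · intro h u hu
      exact h u (by rw [← hu]; exact hE.1.symm (hψE u)) hu
  rw [this]
  exact mforall hE.2.1 hf hfs measurable_snd (Q := fun (p : X × X) u => ψ u ≠ p.2)
    (meq (hψ.comp measurable_snd) (measurable_snd.comp measurable_fst)).not

lemma core [StandardBorelSpace X] {E : X → X → Prop} (hE : IsCBER E) {τ : X → X → ℝ}
    (hτ : IsCocycle E τ) {ψ : X → X} (hψ : Measurable ψ) (hψE : ∀ x, E x (ψ x))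
    (hinj : Function.Injective ψ) (h1 : ∀ x, 1 ≤ τ (ψ x) x) :
    ∃ c : X → ℕ, Measurable c ∧ ∀ x y z, Tail ψ x z → Bad τ ψ z → x ≠ y → Tail ψ x y →
      1/4 < τ x y → τ x y < 4 → c x ≠ c y := by
  obtain ⟨f, hf, hf0, hfE, hfs⟩ := lusin_novikov E hE
  obtain ⟨e, he⟩ := exists_measurableEmbedding_real X
  have hEq := hE.1
  have hT := Tail.equiv ψ
  have hTE : ∀ {x y}, Tail ψ x y → E x y := fun h => Tail.E hEq hψE h
  have hTm := Tail.meas hψ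
  have hfT : ∀ x y, Tail ψ x y → ∃ n, f n x = y := fun x y h => hfs x y (hTE h)
  have hmono := iter_mono hEq hτ hψE h1
  let G : X → X → Prop := fun x y => x ≠ y ∧ Tail ψ x y ∧ 1/4 < τ x y ∧ τ x y < 4
  let M : Option (ℚ × Bool) → X → Prop := fun o z => match o with
    | none => ∀ u, E z u → ψ u ≠ z
    | some (q, true) => (∃ w, Tail ψ z w ∧ (q : ℝ) < τ w z) ∧ ∀ w, Tail ψ z w → τ w (ψ z) ≤ q
    | some (q, false) => (∀ w, Tail ψ z w → (q : ℝ) ≤ τ w z) ∧ ∃ w, Tail ψ z w ∧ τ w (ψ z) < q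
  have hMm : ∀ o, Measurable (M o) := by
    have m1 : Measurable fun p : X × X => τ p.2 p.1 := mcoc hτ.1 measurable_snd measurable_fst
    have m2 : Measurable fun p : X × X => τ p.2 (ψ p.1) :=
      mcoc hτ.1 measurable_snd (hψ.comp measurable_fst)
    rintro (_ | ⟨q, _ | _⟩)
    · exact mforall hE.2.1 hf hfs measurable_id (Q := fun z u => ψ u ≠ z)
        (meq (hψ.comp measurable_snd) measurable_fst).not
    · exact (mforall hTm hf hfT measurable_id (Q := fun z w => (q : ℝ) ≤ τ w z)
        (mle measurable_const m1)).and
        (mexists hTm hf hfT measurable_id (Q := fun z w => τ w (ψ z) < q) (mlt m2 measurable_const))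
    · exact (mexists hTm hf hfT measurable_id (Q := fun z w => (q : ℝ) < τ w z)
        (mlt measurable_const m1)).and
        (mforall hTm hf hfT measurable_id (Q := fun z w => τ w (ψ z) ≤ q) (mle m2 measurable_const))
  -- monotonicity in the base point
  have hbase : ∀ k w z, Tail ψ z w → τ w (ψ^[k] z) ≤ τ w z := by
    intro k w z h
    have hk := Tail.iter ψ k z
    have e1 := hτ.2.2 (hEq.symm (hTE h)) (hTE hk)
    have e2 := hτ.2.2 (hEq.trans (hEq.symm (hTE h)) (hTE hk)) (hEq.symm (hTE hk))
    have e3 := hmono k z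
    have e4 := hτ.2.1 (hEq.trans (hEq.symm (hTE h)) (hTE hk))
    rw [e2]
    nlinarith
  -- markers are unique
  have hMu' : ∀ o z k, M o z → M o (ψ^[k+1] z) → False := by
    intro o z k hz hz'
    have hk : Tail ψ z (ψ^[k+1] z) := Tail.iter ψ (k+1) z
    have hit : ψ^[k+1] z = ψ^[k] (ψ z) := rfl
    have hψz : Tail ψ z (ψ z) := Tail.iter ψ 1 z
    rcases o with _ | ⟨q, _ | _⟩
    · rw [Function.iterate_succ_apply'] at hz'
      exact hz' _ (hEq.symm (hψE _)) rfl
    · obtain ⟨-, w, hw, hlt⟩ := hz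
      have h2 := hz'.1 w (hT.trans (hT.symm hk) hw)
      have h3 := hbase k w (ψ z) (hT.trans (hT.symm hψz) hw)
      rw [hit] at h2
      linarith
    · obtain ⟨⟨w, hw, hlt⟩, -⟩ := hz'
      have hw' := hT.trans hk hw
      have h2 := hz.2 w hw'
      have h3 := hbase k w (ψ z) (hT.trans (hT.symm hψz) hw')
      rw [hit] at hlt
      linarith
  have hMu : ∀ o z z', M o z → M o z' → Tail ψ z z' → z = z' := by
    intro o z z' hz hz' h
    rcases h.lin hinj with ⟨k, rfl⟩ | ⟨k, rfl⟩
    · rcases k with _ | k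
      · rfl
      · exact (hMu' o _ k hz hz').elim
    · rcases k with _ | k
      · rfl
      · exact (hMu' o _ k hz' hz).elim
  let p : (ℚ × ℚ) ⊕ (Option (ℚ × Bool) × ℕ) → X → Prop := fun i x => match i with
    | Sum.inl (a, b) => ((a : ℝ) < e x ∧ e x < b) ∧
        ∀ u, Tail ψ x u → ¬ ((u ≠ x ∧ 1/4 < τ x u ∧ τ x u < 4) ∧ (a : ℝ) < e u ∧ e u < b)
    | Sum.inr (o, j) => ∃ z, Tail ψ x z ∧ (M o z ∧ f j z = x)
  let S : Set X := {x | ∃ z, Tail ψ x z ∧ Bad τ ψ z}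
  obtain ⟨c, hc, hc'⟩ := color_of_family S (bad_meas hE hτ hψ hψE) p (by
      rintro (⟨a, b⟩ | ⟨o, j⟩)
      · have hem := he.measurable
        refine ((mlt measurable_const hem).and (mlt hem measurable_const)).and ?_
        refine mforall hTm hf hfT measurable_id (Q := fun x u =>
          ¬ ((u ≠ x ∧ 1/4 < τ x u ∧ τ x u < 4) ∧ (a : ℝ) < e u ∧ e u < b)) ?_
        refine Measurable.not ?_
        have m1 : Measurable fun p : X × X => τ p.1 p.2 := hτ.1
        have m2 : Measurable fun p : X × X => e p.2 := hem.comp measurable_snd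
        exact ((meq measurable_snd measurable_fst).not.and
          ((mlt measurable_const m1).and (mlt m1 measurable_const))).and
          ((mlt measurable_const m2).and (mlt m2 measurable_const))
      · refine mexists hTm hf hfT measurable_id (Q := fun x z => M o z ∧ f j z = x) ?_
        exact ((hMm o).comp measurable_snd).and (meq ((hf j).comp measurable_snd) measurable_fst))
    (by
      rintro x ⟨z, hxz, hz⟩
      -- it suffices to find a marker
      have key : ∀ o z, Tail ψ x z → M o z → ∃ i, p i x := by
        intro o z h hM
        obtain ⟨j, hj⟩ := hfT z x (hT.symm h)
        exact ⟨Sum.inr (o, j), z, h, hM, hj⟩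
      rcases hz with hz | hz
      · exact key none z hxz (fun u _ => hz u)
      have hzψ : Tail ψ z (ψ z) := Tail.iter ψ 1 z
      have hlam : ∀ w, Tail ψ z w → τ w z = τ w (ψ z) * τ (ψ z) z := fun w hw =>
        hτ.2.2 (hEq.trans (hEq.symm (hTE hw)) (hψE z)) (hEq.symm (hψE z))
      have hpos : ∀ {u v}, Tail ψ u v → 0 < τ u v := fun h => hτ.2.1 (hTE h)
      by_cases hup : ∃ w, Tail ψ x w ∧ 4 < τ w x
      · by_cases hdn : ∃ w, Tail ψ x w ∧ τ w x < 1/4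
        · -- isolated
          obtain ⟨w, hw, hw4⟩ := hup
          obtain ⟨v, hv, hv4⟩ := hdn
          obtain ⟨a, ha⟩ : ∃ a, ψ^[a] x = w := by
            rcases hw.lin hinj with h | ⟨k, hk⟩
            · exact h
            · have h2 := hmono k w
              rw [hk] at h2
              have h3 := hτ.symm_mul hEq (hTE hw)
              nlinarith
          obtain ⟨b, hb⟩ : ∃ b, ψ^[b] v = x := by
            rcases hv.lin hinj with ⟨k, hk⟩ | h
            · have h2 := hmono k x
              rw [hk] at h2
              linarith
            · exact h
          have hab : ψ^[a+b] v = w := by rw [Function.iterate_add_apply, hb, ha]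
          let N : Set X := {u | Tail ψ x u ∧ u ≠ x ∧ 1/4 < τ x u ∧ τ x u < 4}
          have hN : N.Finite := by
            refine ((finite_Iio (a + b + 1)).image (fun j => ψ^[j] v)).subset ?_
            rintro u ⟨hu, -, hu1, hu2⟩
            have hinv := hτ.symm_mul hEq (hTE hu)
            have hux := hpos (hT.symm hu)
            have hu3 : 1/4 < τ u x := by nlinarith
            have hu4 : τ u x < 4 := by nlinarith
            have hvu : Tail ψ v u := hT.trans (hT.symm hv) hu
            obtain ⟨j, hj⟩ : ∃ j, ψ^[j] v = u := by
              rcases hvu.lin hinj with h | ⟨k, hk⟩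
              · exact h
              · have h2 := hmono k u
                rw [hk] at h2
                have h3 := hτ.2.2 (hTE hvu) (hTE (hT.symm hu))
                nlinarith
            refine ⟨j, ?_, hj⟩
            by_contra hlt
            have hge : a + b ≤ j := by
              simp only [mem_Iio] at hlt
              omega
            have h4 : ψ^[j - (a+b)] w = u := by
              rw [← hab, ← Function.iterate_add_apply, Nat.sub_add_cancel hge, hj]
            have h2 := hmono (j - (a+b)) w
            rw [h4] at h2
            have h3 := hτ.2.2 (hTE (hT.trans (hT.symm hu) hw)) (hTE (hT.symm hw))
            nlinarith
          have hopen : IsOpen ((e '' N)ᶜ) := (hN.image e).isClosed.isOpen_compl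
          have hmem : e x ∈ (e '' N)ᶜ := by
            rintro ⟨u, hu, hue⟩
            exact hu.2.1 (he.injective hue)
          obtain ⟨ε, hε, hball⟩ := Metric.isOpen_iff.1 hopen _ hmem
          obtain ⟨qa, hqa1, hqa2⟩ := exists_rat_btwn (show e x - ε < e x by linarith)
          obtain ⟨qb, hqb1, hqb2⟩ := exists_rat_btwn (show e x < e x + ε by linarith)
          refine ⟨Sum.inl (qa, qb), ⟨hqa2, hqb1⟩, ?_⟩
          rintro u hu ⟨⟨hu1, hu2, hu3⟩, hu4, hu5⟩
          have : e u ∈ Metric.ball (e x) ε := by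
            rw [Metric.mem_ball, Real.dist_eq, abs_lt]
            constructor <;> linarith
          exact hball this ⟨u, ⟨hu, hu1, hu2, hu3⟩, rfl⟩
        · -- bounded below
          push Not at hdn
          let A : Set ℝ := {r | ∃ w, Tail ψ z w ∧ τ w z = r}
          have hA : A.Nonempty := ⟨_, z, hT.refl z, rfl⟩
          have hlb : ∀ r ∈ A, 1/4 * τ x z ≤ r := by
            rintro _ ⟨w, hw, rfl⟩
            have hxw := hT.trans hxz hw
            rw [hτ.2.2 (hEq.symm (hTE hxw)) (hTE hxz)]
            have := hdn w hxw
            have := hpos hxz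
            nlinarith
          have hbdd : BddBelow A := ⟨_, hlb⟩
          have hi : 0 < sInf A := lt_of_lt_of_le (by have := hpos hxz; positivity) (le_csInf hA hlb)
          have hlt : sInf A / τ (ψ z) z < sInf A := div_lt_self hi hz
          obtain ⟨q, hq1, hq2⟩ := exists_rat_btwn hlt
          refine key (some (q, false)) z hxz ⟨fun w hw => ?_, ?_⟩
          · exact hq2.le.trans (csInf_le hbdd ⟨w, hw, rfl⟩)
          · have : sInf A < q * τ (ψ z) z := by
              rwa [div_lt_iff₀ (by linarith)] at hq1
            obtain ⟨_, ⟨w, hw, rfl⟩, hwlt⟩ := exists_lt_of_csInf_lt hA this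
            refine ⟨w, hw, ?_⟩
            rw [hlam w hw] at hwlt
            exact lt_of_mul_lt_mul_right hwlt (by linarith)
      · -- bounded above
        push Not at hup
        let A : Set ℝ := {r | ∃ w, Tail ψ z w ∧ τ w z = r}
        have hA : A.Nonempty := ⟨_, z, hT.refl z, rfl⟩
        have hub : ∀ r ∈ A, r ≤ 4 * τ x z := by
          rintro _ ⟨w, hw, rfl⟩
          have hxw := hT.trans hxz hw
          rw [hτ.2.2 (hEq.symm (hTE hxw)) (hTE hxz)]
          have := hup w hxw
          have := hpos hxz
          nlinarith
        have hbdd : BddAbove A := ⟨_, hub⟩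
        have hi : 0 < sSup A := lt_of_lt_of_le (hpos (hT.refl z)) (le_csSup hbdd ⟨z, hT.refl z, rfl⟩)
        have hlt : sSup A / τ (ψ z) z < sSup A := div_lt_self hi hz
        obtain ⟨q, hq1, hq2⟩ := exists_rat_btwn hlt
        refine key (some (q, true)) z hxz ⟨?_, fun w hw => ?_⟩
        · obtain ⟨_, ⟨w, hw, rfl⟩, hwlt⟩ := exists_lt_of_lt_csSup hA hq2
          exact ⟨w, hw, hwlt⟩
        · have h2 : sSup A < q * τ (ψ z) z := by
            rwa [div_lt_iff₀ (by linarith)] at hq1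
          have h3 := le_csSup hbdd ⟨w, hw, rfl⟩
          rw [hlam w hw] at h3
          exact (lt_of_mul_lt_mul_right (lt_of_le_of_lt h3 h2) (by linarith)).le)
    G (by
      rintro (⟨a, b⟩ | ⟨o, j⟩) x y hx hy ⟨hne, hxy, h2, h3⟩
      · exact hx.2 y hxy ⟨⟨hne.symm, h2, h3⟩, hy.1⟩
      · obtain ⟨z, hz, hMz, hjz⟩ := hx
        obtain ⟨z', hz', hMz', hjz'⟩ := hy
        have : z = z' := hMu o z z' hMz hMz' (hT.trans (hT.symm hz) (hT.trans hxy hz'))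
        subst this
        exact hne (hjz.symm.trans hjz'))
  refine ⟨c, hc, fun x y z hxz hz hne hxy h2 h3 => ?_⟩
  exact hc' x y ⟨z, hxz, hz⟩ ⟨z, hT.trans (hT.symm hxy) hxz, hz⟩ ⟨hne, hxy, h2, h3⟩

end Core

section OneTwo
variable {X : Type*} [MeasurableSpace X]

lemma orbit_inj {E : X → X → Prop} (hE : Equivalence E) {τ : X → X → ℝ}
    (hτ : IsCocycle E τ) {ψ : X → X} (hψE : ∀ x, E x (ψ x))
    (hinj : Function.Injective ψ) (h1 : ∀ x, 1 ≤ τ (ψ x) x) {x z : X} (hxz : Tail ψ x z)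
    (hz : Bad τ ψ z) : Function.Injective fun k => ψ^[k] x := by
  have key : ∀ j d, ψ^[j + (d + 1)] x = ψ^[j] x → False := by
    intro j d h
    have hx : ψ^[d+1] x = x := by
      apply hinj.iterate j
      rw [← Function.iterate_add_apply, h]
    obtain ⟨m, n, hmn⟩ := hxz
    have hzz : ψ^[d+1] z = z := by
      apply hinj.iterate n
      rw [← Function.iterate_add_apply, add_comm, Function.iterate_add_apply, ← hmn,
        ← Function.iterate_add_apply, add_comm, Function.iterate_add_apply, hx]
    rcases hz with hz | hz
    · rw [Function.iterate_succ_apply'] at hzz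
      exact hz _ hzz
    · have h2 := iter_mono hE hτ hψE h1 d (ψ z)
      rw [Function.iterate_succ_apply] at hzz
      rw [hzz] at h2
      have h3 := hτ.symm_mul hE (hψE z)
      nlinarith
  intro j k h
  simp only at h
  rcases lt_trichotomy j k with hjk | hjk | hjk
  · obtain ⟨d, rfl⟩ := Nat.exists_eq_add_of_lt hjk
    exact (key j d h.symm).elim
  · exact hjk
  · obtain ⟨d, rfl⟩ := Nat.exists_eq_add_of_lt hjk
    exact (key k d h).elim

open Classical in
theorem one_two [StandardBorelSpace X]
    (E : X → X → Prop) (hE : IsCBER E)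
    (ρ : X → X → ℝ) (hρ : IsCocycle E ρ) :
    (∃ (F : X → X → Prop) (hF : Equivalence F), IsFinSubequiv E F ∧
        ∃ φ : Quotient (Setoid.mk F hF) → Quotient (Setoid.mk F hF),
          Measurable φ ∧ Function.Injective φ ∧
          QuotCompressionOn E ρ Set.univ (Setoid.mk F hF) φ) →
    (∃ F : X → X → Prop, Equivalence F ∧ MeasurableSet {p : X × X | F p.1 p.2} ∧
        (∀ ⦃x y : X⦄, F x y → E x y) ∧
        (∀ x : X, eSize ρ {y | F y x} x = ⊤) ∧ Smooth F ρ) := by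
  rintro ⟨F, hF, ⟨-, hFm, hFE, hFfin⟩, φ, hφm, hφi, hφ1, hφ2, hφ3⟩
  letI s : Setoid X := Setoid.mk F hF
  obtain ⟨f, hf, hf0, hfE, hfs⟩ := lusin_novikov E hE
  obtain ⟨e, he⟩ := exists_measurableEmbedding_real X
  have hEq := hE.1
  have hfF : ∀ x y, F x y → ∃ n, f n x = y := fun x y h => hfs x y (hFE h)
  have hmk : ∀ x y : X, Quotient.mk s x = Quotient.mk s y ↔ F x y := fun x y =>
    ⟨fun h => Quotient.exact h, fun h => Quotient.sound h⟩
  -- selector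
  obtain ⟨sl, hslm, hsl⟩ := sel (f := f) hf
    (p := fun n x => F x (f n x) ∧ ∀ u, F x u → e (f n x) ≤ e u)
    (fun n => measurableSet_setOfPred.2 ((mrel hFm measurable_id (hf n)).and
      (mforall hFm hf hfF measurable_id (Q := fun x u => e (f n x) ≤ e u)
        (mle (he.measurable.comp ((hf n).comp measurable_fst))
          (he.measurable.comp measurable_snd))))) (by
      intro x
      obtain ⟨u, hu, hmin⟩ := Set.exists_min_image _ e (hFfin x) ⟨x, hF.refl x⟩
      obtain ⟨n, rfl⟩ := hfF x u hu
      exact ⟨n, hu, fun v hv => hmin v hv⟩)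
  have hsl1 : ∀ x, F x (sl x) ∧ ∀ u, F x u → e (sl x) ≤ e u := by
    intro x
    obtain ⟨n, h, -, h'⟩ := hsl x
    rw [h']; exact h
  have hslF : ∀ x y, F x y → sl x = sl y := by
    intro x y h
    apply he.injective
    apply le_antisymm
    · exact (hsl1 x).2 _ (hF.trans h (hsl1 y).1)
    · exact (hsl1 y).2 _ (hF.trans (hF.symm h) (hsl1 x).1)
  have hslsl : ∀ x, sl (sl x) = sl x := fun x => (hslF _ _ (hsl1 x).1).symm
  let slq : Quotient s → X := Quotient.lift sl hslF
  have hslqm : Measurable slq := measurable_from_quotient.2 hslm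
  have hslq : ∀ x, slq (Quotient.mk s x) = sl x := fun x => rfl
  have hslq' : ∀ q, Quotient.mk s (slq q) = q ∧ sl (slq q) = slq q := by
    intro q
    induction q using Quotient.inductionOn with | h x => ?_
    exact ⟨(hmk _ _).2 (hF.symm (hsl1 x).1), hslsl x⟩
  let ψ : X → X := fun x => slq (φ (Quotient.mk s x))
  have hψm : Measurable ψ := hslqm.comp (hφm.comp measurable_quotient_mk')
  have hψmk : ∀ x, φ (Quotient.mk s x) = Quotient.mk s (ψ x) := fun x => (hslq' _).1.symm
  have hψsl : ∀ x, sl (ψ x) = ψ x := fun x => (hslq' _).2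
  have hψE : ∀ x, E x (ψ x) := fun x => (hφ1 (mem_univ x) _ (hψmk x)).1
  have hψi : ∀ x y, ψ x = ψ y → F x y := by
    intro x y h
    have : φ (Quotient.mk s x) = φ (Quotient.mk s y) := by rw [hψmk, hψmk, h]
    exact (hmk _ _).1 (hφi this)
  -- weights
  let wE : X → ℝ≥0∞ := fun y => eSize ρ {z | F z y} y
  have hwEm : Measurable wE := by
    let g : ℕ → X → ℝ≥0∞ := fun n y =>
      if F (f n y) y ∧ ∀ m < n, f m y ≠ f n y then ENNReal.ofReal (ρ (f n y) y) else 0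
    have : wE = fun y => ∑' n, g n y := by
      funext y
      refine eSize_enum2 f y y _ (fun z hz => hfF y z (hF.symm hz)) _ ?_ ?_
      · intro n h
        exact if_pos h
      · intro n h
        exact if_neg h
    rw [this]
    refine Measurable.ennreal_tsum fun n => ?_
    refine Measurable.ite (measurableSet_setOfPred.2 ?_)
      (mcoc hρ.1 (hf n) measurable_id).ennreal_ofReal measurable_const
    exact (mrel hFm (hf n) measurable_id).and
      (Measurable.forall fun m => Measurable.forall fun _ => (meq (hf m) (hf n)).not)
  have hwEfin : ∀ y, wE y ≠ ⊤ := by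
    intro y
    have hfin : {z | F z y}.Finite := (hFfin y).subset fun z hz => hF.symm hz
    haveI := hfin.fintype
    simp only [wE, eSize]
    rw [tsum_fintype]
    exact ENNReal.sum_ne_top.2 fun _ _ => ENNReal.ofReal_ne_top
  have hwE1 : ∀ y, 1 ≤ wE y := by
    intro y
    have : eSize ρ {y} y ≤ wE y := eSize_mono (by rintro z rfl; exact hF.refl _) _
    rwa [eSize_singleton, hρ.self hEq, ENNReal.ofReal_one] at this
  let w : X → ℝ := fun y => (wE y).toReal
  have hwm : Measurable w := hwEm.ennreal_toReal
  have hwpos : ∀ y, 0 < w y := fun y =>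
    ENNReal.toReal_pos (fun h => by have := hwE1 y; rw [h] at this; simp at this) (hwEfin y)
  have hwof : ∀ y, ENNReal.ofReal (w y) = wE y := fun y => ENNReal.ofReal_toReal (hwEfin y)
  -- size of a class at another point
  have hcls : ∀ y x, E y x → eSize ρ {z | F z y} x = ENNReal.ofReal (w y * ρ y x) := by
    intro y x h
    rw [eSize_change (A := {z | F z y}) hEq hρ h (fun z hz => hFE hz),
      ENNReal.ofReal_mul (hwpos y).le, hwof]
  have hwF : ∀ a b, F a b → w b = w a * ρ a b := by
    intro a b h
    have e1 : {z | F z a} = {z | F z b} := by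
      ext z; exact ⟨fun h' => hF.trans h' h, fun h' => hF.trans h' (hF.symm h)⟩
    have h2 := hcls a b (hFE h)
    rw [e1] at h2
    show (eSize ρ {z | F z b} b).toReal = _
    rw [h2, ENNReal.toReal_ofReal (mul_pos (hwpos a) (hρ.2.1 (hFE h))).le]
  -- preimages
  have hpre : ∀ u y, F (ψ u) y →
      {z | z ∈ (univ : Set X) ∧ φ (Quotient.mk s z) = Quotient.mk s y} = {z | F z u} := by
    intro u y h
    ext z
    simp only [mem_univ, true_and, mem_setOf_eq]
    rw [← (hmk _ _).2 h, ← hψmk]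
    exact ⟨fun h' => (hmk _ _).1 (hφi h'), fun h' => by rw [(hmk _ _).2 h']⟩
  let τ : X → X → ℝ := fun a b => ρ a b * w a / w b
  have hτ : IsCocycle E τ := by
    refine ⟨(hρ.1.mul (hwm.comp measurable_fst)).div (hwm.comp measurable_snd), ?_, ?_⟩
    · intro x y h
      exact div_pos (mul_pos (hρ.2.1 h) (hwpos x)) (hwpos y)
    · intro x y z h h'
      simp only [τ]
      rw [hρ.2.2 h h']
      have := (hwpos y).ne'
      field_simp
  have hrel : ∀ x, relSize ρ {z | z ∈ (univ : Set X) ∧ φ (Quotient.mk s z) = Quotient.mk s x}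
      {z | F z x} x = eSize ρ {z | z ∈ (univ : Set X) ∧ φ (Quotient.mk s z) = Quotient.mk s x} x / wE x :=
    fun x => rfl
  have hwE0 : ∀ y, wE y ≠ 0 := fun y h => by have := hwE1 y; rw [h] at this; simp at this
  have hτ1 : ∀ x, 1 ≤ τ (ψ x) x := by
    intro x
    have h2 : relSize ρ {z | z ∈ (univ : Set X) ∧ φ (Quotient.mk s z) = Quotient.mk s (ψ x)}
      {z | F z (ψ x)} (ψ x) ≤ 1 := hφ2 (mem_univ (ψ x))
    rw [hrel, hpre x (ψ x) (hF.refl _), hcls x _ (hψE x),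
      ENNReal.div_le_iff (hwE0 _) (hwEfin _), one_mul, ← hwof,
      ENNReal.ofReal_le_ofReal_iff (hwpos _).le] at h2
    have h3 := hρ.symm_mul hEq (hψE x)
    have h4 := hρ.2.1 (hEq.symm (hψE x))
    simp only [τ]
    rw [le_div_iff₀ (hwpos x), one_mul]
    calc w x = ρ (ψ x) x * (w x * ρ x (ψ x)) := by linear_combination -(w x) * h3
      _ ≤ ρ (ψ x) x * w (ψ x) := by gcongr
  -- the subtype
  let Y : Set X := {x | sl x = x}
  have hY : MeasurableSet Y := measurableSet_setOfPred.2 (meq hslm measurable_id)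
  haveI : StandardBorelSpace Y := hY.standardBorel
  let EY : Y → Y → Prop := fun a b => E a b
  let τY : Y → Y → ℝ := fun a b => τ a b
  let ψY : Y → Y := fun a => ⟨ψ a, hψsl a⟩
  have hpm : Measurable fun p : Y × Y => ((p.1 : X), (p.2 : X)) :=
    (measurable_subtype_coe.comp measurable_fst).prodMk (measurable_subtype_coe.comp measurable_snd)
  have hEY : IsCBER EY := by
    refine ⟨⟨fun x => hEq.refl _, fun h => hEq.symm h, fun h h' => hEq.trans h h'⟩, hpm hE.2.1, ?_⟩
    intro x
    exact (hE.2.2 (x : X)).preimage Subtype.val_injective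
  have hτY : IsCocycle EY τY :=
    ⟨hτ.1.comp hpm, fun x y h => hτ.2.1 h, fun x y z h h' => hτ.2.2 h h'⟩
  have hψYm : Measurable ψY := (hψm.comp measurable_subtype_coe).subtype_mk
  have hψYE : ∀ x, EY x (ψY x) := fun x => hψE x
  have hψYi : Function.Injective ψY := by
    intro a b h
    have h1 : ψ a = ψ b := congrArg Subtype.val h
    have h2 := hslF _ _ (hψi _ _ h1)
    apply Subtype.ext
    rw [← a.2, ← b.2]
    exact h2
  have hτY1 : ∀ x, 1 ≤ τY (ψY x) x := fun x => hτ1 x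
  obtain ⟨c, hcm, hc⟩ := core hEY hτY hψYm hψYE hψYi hτY1
  let S : Set Y := {x | ∃ z, Tail ψY x z ∧ Bad τY ψY z}
  have hSm : MeasurableSet S := bad_meas hEY hτY hψYm hψYE
  have hT := Tail.equiv ψY
  have hST : ∀ x y, Tail ψY x y → x ∈ S → y ∈ S := fun x y h ⟨z, hz, hb⟩ =>
    ⟨z, hT.trans (hT.symm h) hz, hb⟩
  have hTE : ∀ {x y : Y}, Tail ψY x y → E x y := fun h => Tail.E hEY.1 hψYE h
  let sY : X → Y := fun x => ⟨sl x, hslsl x⟩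
  have hsYm : Measurable sY := hslm.subtype_mk
  -- every class contains a bad point
  have hbad : ∀ x, ∃ u : Y, E x u ∧ Bad τY ψY u := by
    intro x
    obtain ⟨y, -, hxy, hlt⟩ := hφ3 (mem_univ x)
    have hlt' : relSize ρ {z | z ∈ (univ : Set X) ∧ φ (Quotient.mk s z) = Quotient.mk s y}
      {z | F z y} y < 1 := hlt
    by_cases hz : ∃ u : Y, ψ u = sl y
    · obtain ⟨u, hu⟩ := hz
      have hFy : F (ψ u) y := by rw [hu]; exact hF.symm (hsl1 y).1
      have hEuy : E u y := hEq.trans (hψE u) (hFE hFy)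
      refine ⟨u, hEq.trans hxy (hEq.symm hEuy), Or.inr ?_⟩
      rw [hrel, hpre u y hFy, hcls u y hEuy, ENNReal.div_lt_iff (Or.inl (hwE0 _)) (Or.inl (hwEfin _)),
        one_mul, ← hwof, ENNReal.ofReal_lt_ofReal_iff (hwpos _)] at hlt'
      have h1 := hwF _ _ hFy
      have h2 := hρ.2.2 (hψE u) (hFE hFy)
      have h3 := hρ.symm_mul hEq (hψE u)
      have h4 := hρ.2.1 (hFE hFy)
      have h5 := hρ.2.1 (hEq.symm (hψE u))
      show 1 < ρ (ψ u) u * w (ψ u) / w u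
      rw [lt_div_iff₀ (hwpos u), one_mul]
      rw [h1, h2, ← mul_assoc] at hlt'
      have h6 := lt_of_mul_lt_mul_right hlt' h4.le
      calc w u = ρ (ψ u) u * (w u * ρ u (ψ u)) := by linear_combination -(w u) * h3
        _ < ρ (ψ u) u * w (ψ u) := by gcongr
    · push Not at hz
      refine ⟨sY y, hEq.trans hxy (hFE (hsl1 y).1), Or.inl ?_⟩
      intro u hu
      exact hz u (congrArg Subtype.val hu)
  obtain ⟨r, hrm, hr⟩ := sel (f := fun n x => sY (f n x)) (fun n => hsYm.comp (hf n))
    (p := fun n x => sY (f n x) ∈ S) (fun n => measurableSet_setOfPred.2 (mmem (hsYm.comp (hf n)) hSm)) (by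
      intro x
      obtain ⟨u, hu, hb⟩ := hbad x
      obtain ⟨n, hn⟩ := hfs x u hu
      refine ⟨n, ?_⟩
      have : sY (f n x) = u := by
        apply Subtype.ext
        show sl (f n x) = u
        rw [hn]; exact u.2
      show sY (f n x) ∈ S
      rw [this]
      exact ⟨u, hT.refl u, hb⟩)
  have hrS : ∀ x, r x ∈ S := by
    intro x
    obtain ⟨n, h, -, h'⟩ := hr x
    rw [h']; exact h
  have hrE : ∀ x, E x (r x) := by
    intro x
    obtain ⟨n, h, -, h'⟩ := hr x
    rw [h']
    exact hEq.trans (hfE n x) (hFE (hsl1 _).1)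
  have hrs : ∀ x, sY x ∈ S → r x = sY x := by
    intro x hx
    obtain ⟨n, h, h2, h'⟩ := hr x
    rcases n with _ | n
    · rw [h', hf0]; rfl
    · exact absurd (by rw [hf0]; exact hx) (h2 0 (Nat.succ_pos n))
  let F' : X → X → Prop := fun x y => Tail ψY (r x) (r y)
  have hF'E : ∀ {x y}, F' x y → E x y := fun {x y} h =>
    hEq.trans (hrE x) (hEq.trans (hTE h) (hEq.symm (hrE y)))
  refine ⟨F', ⟨fun x => hT.refl _, fun h => hT.symm h, fun h h' => hT.trans h h'⟩,
    measurableSet_setOfPred.2 (mrel (Tail.meas hψYm) (hrm.comp measurable_fst) (hrm.comp measurable_snd)),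
    fun x y h => hF'E h, ?_, ?_⟩
  · -- aperiodic
    intro x
    let v : ℕ → Y := fun k => ψY^[k] (r x)
    let A : ℕ → Set X := fun k => {y | F y (v k)}
    have hv : ∀ k, Tail ψY (r x) (v k) := fun k => Tail.iter ψY k (r x)
    have hsA : ∀ k, ∀ y ∈ A k, sY y = v k := by
      intro k y hy
      apply Subtype.ext
      show sl y = v k
      rw [hslF _ _ hy]
      exact (v k).2
    have hsub : ∀ k, ∀ y ∈ A k, F' y x := by
      intro k y hy
      have h1 := hsA k y hy
      have h2 : r y = v k := by
        rw [hrs y (by rw [h1]; exact hST _ _ (hv k) (hrS x)), h1]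
      show Tail ψY (r y) (r x)
      rw [h2]
      exact hT.symm (hv k)
    have hinj : Function.Injective v := by
      obtain ⟨z, hz, hb⟩ := hrS x
      exact orbit_inj hEY.1 hτY hψYE hψYi hτY1 hz hb
    let j : (Σ k, A k) → {y | F' y x} := fun p => ⟨p.2, hsub p.1 p.2 p.2.2⟩
    have hj : Function.Injective j := by
      rintro ⟨k, y, hy⟩ ⟨k', y', hy'⟩ h
      have h1 : y = y' := congrArg Subtype.val h
      subst h1
      have h2 : k = k' := hinj ((hsA k y hy).symm.trans (hsA k' y hy'))
      subst h2
      rfl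
    have h1 : ∑' k, eSize ρ (A k) x ≤ eSize ρ {y | F' y x} x := by
      unfold eSize
      rw [← ENNReal.tsum_sigma' (fun p : Σ k, A k => ENNReal.ofReal (ρ p.2 x))]
      exact ENNReal.tsum_comp_le_tsum_of_injective hj (fun y => ENNReal.ofReal (ρ y x))
    have hEx : E (r x) x := hEq.symm (hrE x)
    have hδ : 0 < w (r x) * ρ (r x) x := mul_pos (hwpos _) (hρ.2.1 hEx)
    have h2 : ∀ k, ENNReal.ofReal (w (r x) * ρ (r x) x) ≤ eSize ρ (A k) x := by
      intro k
      have hvr : E (v k) (r x) := hEq.symm (hTE (hv k))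
      rw [hcls (v k) x (hEq.trans hvr hEx)]
      apply ENNReal.ofReal_le_ofReal
      rw [hρ.2.2 hvr hEx, ← mul_assoc]
      have h3 : 1 ≤ ρ (v k) (r x) * w (v k) / w (r x) := iter_mono hEY.1 hτY hψYE hτY1 k (r x)
      rw [le_div_iff₀ (hwpos _), one_mul] at h3
      have h4 := hρ.2.1 hEx
      have : w (r x) ≤ w (v k) * ρ (v k) (r x) := by linarith
      gcongr
    refine top_le_iff.1 (le_trans ?_ h1)
    rw [← ENNReal.tsum_const_eq_top_of_ne_zero (α := ℕ)
      (c := ENNReal.ofReal (w (r x) * ρ (r x) x)) (by simpa using hδ)]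
    exact ENNReal.tsum_le_tsum h2
  · -- smooth
    refine ⟨Ioo (1/2) 2, isOpen_Ioo, by norm_num, fun a ha => ?_, ?_⟩
    · have := ha.1
      simp only [mem_Ioi]
      linarith
    let u : X → ℝ := fun x => ρ (r x) x * w (r x)
    have hrm' : Measurable fun x => (r x : X) := measurable_subtype_coe.comp hrm
    have hum : Measurable u := (mcoc hρ.1 hrm' measurable_id).mul (hwm.comp hrm')
    have hupos : ∀ x, 0 < u x := fun x => mul_pos (hρ.2.1 (hEq.symm (hrE x))) (hwpos _)
    let p : ℤ × ℕ × ℕ → X → Prop := fun i x =>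
      ((2:ℝ)^i.1 ≤ u x ∧ u x < (2:ℝ)^(i.1+1)) ∧ f i.2.1 (r x) = x ∧ c (r x) = i.2.2
    obtain ⟨d, hdm, hd⟩ := color_of_family (univ : Set X) MeasurableSet.univ p (by
        rintro ⟨i, n, m⟩
        exact ((mle measurable_const hum).and (mlt hum measurable_const)).and
          ((meq ((hf n).comp hrm') measurable_id).and (meq (hcm.comp hrm) measurable_const))) (by
        intro x _
        obtain ⟨i, hi⟩ := exists_mem_Ico_zpow (hupos x) (by norm_num : (1:ℝ) < 2)
        obtain ⟨n, hn⟩ := hfs (r x) x (hEq.symm (hrE x))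
        exact ⟨(i, n, c (r x)), ⟨hi.1, hi.2⟩, hn, rfl⟩)
      (fun x y => x ≠ y ∧ F' x y ∧ ρ x y ∈ Ioo (1/2:ℝ) 2) (by
        rintro ⟨i, n, m⟩ x y ⟨⟨hx1, hx2⟩, hx3, hx4⟩ ⟨⟨hy1, hy2⟩, hy3, hy4⟩ ⟨hne, hxy, hl, hr2⟩
        simp only at hx1 hx2 hx3 hx4 hy1 hy2 hy3 hy4
        rw [zpow_add_one₀ (by norm_num : (2:ℝ) ≠ 0)] at hx2 hy2
        have hre : r x ≠ r y := by
          intro h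
          apply hne
          rw [← hx3, ← hy3, h]
        have hExy := hF'E hxy
        have hτe : τY (r x) (r y) = u x * ρ x y / u y := by
          show ρ (r x) (r y) * w (r x) / w (r y) = _
          have e1 := hρ.2.2 (hEq.symm (hrE x)) hExy
          have e2 := hρ.2.2 (hEq.trans (hEq.symm (hrE x)) hExy) (hrE y)
          have e3 := hρ.symm_mul hEq (hrE y)
          have e4 := (hρ.2.1 (hEq.symm (hrE y))).ne'
          rw [e2, e1]
          simp only [u]
          have e5 := (hwpos (r y)).ne'
          rw [div_eq_div_iff e5 (mul_ne_zero e4 e5)]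
          linear_combination (ρ (r x) x * ρ x y * w (r x) * w (r y)) * e3
        have hz := hupos y
        obtain ⟨z, hz', hb⟩ := hrS x
        refine hc (r x) (r y) z hz' hb hre hxy ?_ ?_ (hx4.trans hy4.symm)
        · rw [hτe, lt_div_iff₀ hz]
          have := hupos x
          nlinarith
        · rw [hτe, div_lt_iff₀ hz]
          have := hupos x
          nlinarith)
    exact ⟨d, hdm, fun x y _ _ hne hxy hρxy => hd x y (mem_univ _) (mem_univ _) ⟨hne, hxy, hρxy⟩⟩

end OneTwo

/-- Characterization of the existence of an injective Borel compression of the quotient of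
`ρ` by a finite Borel subequivalence relation of `E`: (1) ↔ (2) ↔ (3). -/
theorem stmt4 [MeasurableSpace X] [StandardBorelSpace X]
    (E : X → X → Prop) (hE : IsCBER E)
    (ρ : X → X → ℝ) (hρ : IsCocycle E ρ) :
    ((∃ (F : X → X → Prop) (hF : Equivalence F), IsFinSubequiv E F ∧
        ∃ φ : Quotient (Setoid.mk F hF) → Quotient (Setoid.mk F hF),
          Measurable φ ∧ Function.Injective φ ∧
          QuotCompressionOn E ρ Set.univ (Setoid.mk F hF) φ) ↔
      (∃ F : X → X → Prop, Equivalence F ∧ MeasurableSet {p : X × X | F p.1 p.2} ∧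
        (∀ ⦃x y : X⦄, F x y → E x y) ∧
        (∀ x : X, eSize ρ {y | F y x} x = ⊤) ∧ Smooth F ρ)) ∧
    ((∃ F : X → X → Prop, Equivalence F ∧ MeasurableSet {p : X × X | F p.1 p.2} ∧
        (∀ ⦃x y : X⦄, F x y → E x y) ∧
        (∀ x : X, eSize ρ {y | F y x} x = ⊤) ∧ Smooth F ρ) ↔
      (∃ B : Set X, MeasurableSet B ∧ EInvariant E B ∧
        ∃ F : X → X → Prop, Equivalence F ∧ MeasurableSet {p : X × X | F p.1 p.2} ∧
          (∀ ⦃x y : X⦄, F x y → E x y) ∧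
          (∃ T : Set X, MeasurableSet T ∧ T ⊆ Bᶜ ∧ ∀ x ∈ Bᶜ, ∃! y, y ∈ T ∧ F x y) ∧
          (∀ x ∉ B, eSize ρ {y | F y x ∧ y ∉ B} x = ⊤) ∧
          (∃ T : X ≃ᵐ X, (∀ x ∈ B, T x ∈ B ∧ F x (T x)) ∧ (∀ x ∈ B, T.symm x ∈ B) ∧
            ∀ x ∈ B, eSize ρ {y | y ∈ B ∧ T y = x} x < 1))) := by
  exact ⟨⟨one_two E hE ρ hρ, fun h => three_one E hE ρ hρ (two_three E hE ρ hρ h)⟩,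
    ⟨two_three E hE ρ hρ, fun h => one_two E hE ρ hρ (three_one E hE ρ hρ h)⟩⟩

end CocycleNadkarni
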